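/- Let (ν_J)_{J∈ℤ} be a modular invariant spectrum and let a, b be reals with A ≤ a < b. For an integer J let ℓ_J(a,b) denote the supremum of the lengths of the connected components of the open set (a,b) \ supp(ν_J), with ℓ_J(a,b) := 0 if this set is empty. Then for every ε > 0, lim_{J→∞} J^{1/4−ε} · ℓ_J(a,b) = 0. -/

import Mathlib

open MeasureTheory Filter Topology Real

noncomputable section

/-- A spectrum: a family of positive Borel measures on `ℝ`, each supported in
`{h | Tgap < h ∧ Tgap < h + J}`, with finite total Laplace-type sum. -/
def IsSpectrum (Tgap : ℝ) (ν : ℤ → Measure ℝ) : Prop :=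
  (∀ J : ℤ, ν J {h : ℝ | ¬ (Tgap < h ∧ Tgap < h + (J : ℝ))} = 0) ∧
  (∀ b b' : ℝ, 0 < b → 0 < b' →
    (∑' J : ℤ, ∫⁻ h : ℝ, ENNReal.ofReal (Real.exp (-b * h - b' * (h + (J : ℝ)))) ∂(ν J)) < ⊤)

/-- The reduced (Virasoro primary) partition function. -/
def Ztilde (A : ℝ) (ν : ℤ → Measure ℝ) (βL βR : ℂ) : ℂ :=
  Complex.exp ((A : ℂ) * (βL + βR)) *
    ((1 - Complex.exp (-βL)) * (1 - Complex.exp (-βR)) +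
      ∑' J : ℤ, ∫ h : ℝ, Complex.exp (-βL * (h : ℂ) - βR * ((h : ℂ) + (J : ℂ))) ∂(ν J))

/-- Modular invariance of the reduced partition function (principal square root). -/
def ModularInvariant (A : ℝ) (ν : ℤ → Measure ℝ) : Prop :=
  ∀ βL βR : ℂ, 0 < βL.re → 0 < βR.re →
    Ztilde A ν βL βR =
      ((4 * (π : ℂ) ^ 2) / (βL * βR)) ^ ((1 : ℂ) / 2) *
        Ztilde A ν (4 * (π : ℂ) ^ 2 / βL) (4 * (π : ℂ) ^ 2 / βR)

/-- The topological support of a measure on `ℝ`. -/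
def measSupport (μ : Measure ℝ) : Set ℝ :=
  {x : ℝ | ∀ U : Set ℝ, IsOpen U → x ∈ U → 0 < μ U}

/-- The maximal level spacing `ℓ_J(a,b)`: the supremum of the diameters (lengths) of the
connected components of `(a,b) \ supp(ν_J)` (equal to `0` if this set is empty, since
`Real.sSup ∅ = 0`). -/
def maxGap (μ : Measure ℝ) (a b : ℝ) : ℝ :=
  sSup ((fun x => Metric.diam (connectedComponentIn (Set.Ioo a b \ measSupport μ) x)) ''
    (Set.Ioo a b \ measSupport μ))

/-!
Modular invariance trades the vacuum for a universal density of primaries: writing `ρ` for the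
inverse Laplace transform of the `S`-transformed vacuum character, the spin-`J` spectrum at
`h = A + t` is modelled by `ρ(t) ρ(J + t) dt`, of total size `e^{4π√(AJ)}` up to powers of `J`.
Projecting the partition function at `β_R ≈ 2π√(A/J)` onto spin `J`, the twist gap makes every other
contribution exponentially smaller, and one finds that on the line `Re w = 1` the Laplace
transforms of the model and of the actual spectrum agree up to a relative error `e^{-κ√J}` as long
as `|Im w| ≲ J^{1/4}`. A Gaussian test function of variance `J^{-1/2+ε}` has a Fourier transform
concentrated in this window, so it cannot distinguish the two measures; since its integral against
the model is only polynomially smaller than `e^{4π√(AJ)}`, the spectrum cannot leave an interval of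
radius `J^{-1/4+ε}` empty.
-/

section

open Complex (I)

/-- The entire function `∑ₙ xⁿ / (2n)!` on the real line, that is `cosh √x` for `0 ≤ x` and
`cos √(-x)` for `x ≤ 0`. Since `Real.sqrt` vanishes on negative numbers, one of the two factors
below is always `1`. -/
def coshSqrt (x : ℝ) : ℝ := Real.cosh √x * Real.cos √(-x)

lemma continuous_coshSqrt : Continuous coshSqrt := by
  unfold coshSqrt
  fun_prop

lemma coshSqrt_of_nonneg {x : ℝ} (hx : 0 ≤ x) : coshSqrt x = Real.cosh √x := by
  simp [coshSqrt, Real.sqrt_eq_zero_of_nonpos (neg_nonpos.mpr hx)]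

lemma coshSqrt_of_nonpos {x : ℝ} (hx : x ≤ 0) : coshSqrt x = Real.cos √(-x) := by
  simp [coshSqrt, Real.sqrt_eq_zero_of_nonpos hx]

lemma ofReal_coshSqrt_of_sq_eq {x : ℝ} {w : ℂ} (h : w ^ 2 = x) :
    (coshSqrt x : ℂ) = Complex.cosh w := by
  rcases le_total 0 x with hx | hx
  · have hw : w ^ 2 = ((√x : ℝ) : ℂ) ^ 2 := by rw [h, ← Complex.ofReal_pow, Real.sq_sqrt hx]
    rw [coshSqrt_of_nonneg hx, Complex.ofReal_cosh]
    rcases sq_eq_sq_iff_eq_or_eq_neg.mp hw with rfl | rfl <;> simp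
  · have hw : w ^ 2 = ((√(-x) : ℝ) * I) ^ 2 := by
      rw [h, mul_pow, Complex.I_sq, ← Complex.ofReal_pow, Real.sq_sqrt (neg_nonneg.mpr hx)]
      simp
    rw [coshSqrt_of_nonpos hx, Complex.ofReal_cos, ← Complex.cosh_mul_I]
    rcases sq_eq_sq_iff_eq_or_eq_neg.mp hw with rfl | rfl <;> simp

lemma abs_coshSqrt_le_cosh (x : ℝ) : |coshSqrt x| ≤ Real.cosh √x := by
  rw [coshSqrt, abs_mul, abs_of_pos (Real.cosh_pos _)]
  exact mul_le_of_le_one_right (Real.cosh_pos _).le (Real.abs_cos_le_one _)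

lemma cosh_le_exp_of_nonneg {x : ℝ} (hx : 0 ≤ x) : Real.cosh x ≤ Real.exp x := by
  have : Real.exp (-x) ≤ Real.exp x := Real.exp_le_exp.mpr (by linarith)
  rw [Real.cosh_eq]
  linarith

lemma sq_sub_sq_div_two_le_cosh_sub_cosh {a b : ℝ} (hb : 0 ≤ b) (hba : b ≤ a) :
    (a ^ 2 - b ^ 2) / 2 ≤ Real.cosh a - Real.cosh b := by
  have cosh_sub_cosh :
      Real.cosh a - Real.cosh b = 2 * (Real.sinh ((a + b) / 2) * Real.sinh ((a - b) / 2)) := by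
    have hadd := Real.cosh_add ((a + b) / 2) ((a - b) / 2)
    have hsub := Real.cosh_sub ((a + b) / 2) ((a - b) / 2)
    rw [show (a + b) / 2 + (a - b) / 2 = a by ring] at hadd
    rw [show (a + b) / 2 - (a - b) / 2 = b by ring] at hsub
    rw [hadd, hsub]
    ring
  have hsum : (a + b) / 2 ≤ Real.sinh ((a + b) / 2) := Real.self_le_sinh_iff.mpr (by linarith)
  have hdiff : (a - b) / 2 ≤ Real.sinh ((a - b) / 2) := Real.self_le_sinh_iff.mpr (by linarith)
  rw [cosh_sub_cosh]
  linarith [mul_le_mul hsum hdiff (by linarith) (by linarith)]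

lemma exp_div_four_le_cosh_sub_cosh {a b : ℝ} (hb : 0 ≤ b) (hba : b + 2 ≤ a) :
    Real.exp a / 4 ≤ Real.cosh a - Real.cosh b := by
  have hquarter : 4 * Real.exp b ≤ Real.exp a := calc
    4 * Real.exp b ≤ Real.exp 2 * Real.exp b := by
      gcongr
      rw [show (2 : ℝ) = 1 + 1 by norm_num, Real.exp_add]
      nlinarith [Real.add_one_le_exp 1]
    _ = Real.exp (b + 2) := by rw [← Real.exp_add, add_comm]
    _ ≤ Real.exp a := Real.exp_le_exp.mpr hba
  have ha : Real.exp a / 2 ≤ Real.cosh a := by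
    rw [Real.cosh_eq]
    linarith [Real.exp_pos (-a)]
  linarith [cosh_le_exp_of_nonneg hb]

lemma sub_max_div_two_le_coshSqrt_sub {x y : ℝ} (hx : 0 ≤ x) (hyx : y ≤ x) :
    (x - max y 0) / 2 ≤ coshSqrt x - coshSqrt y := by
  have hsq : √y ^ 2 = max y 0 := by
    rcases le_total 0 y with hy | hy
    · rw [Real.sq_sqrt hy, max_eq_left hy]
    · rw [Real.sqrt_eq_zero_of_nonpos hy, max_eq_right hy, zero_pow two_ne_zero]
  have hcosh := sq_sub_sq_div_two_le_cosh_sub_cosh (Real.sqrt_nonneg y) (Real.sqrt_le_sqrt hyx)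
  rw [Real.sq_sqrt hx, hsq] at hcosh
  rw [coshSqrt_of_nonneg hx]
  linarith [(abs_le.mp (abs_coshSqrt_le_cosh y)).2]

lemma exp_sqrt_div_four_le_coshSqrt_sub {x y : ℝ} (hx : 0 ≤ x) (hyx : √y + 2 ≤ √x) :
    Real.exp √x / 4 ≤ coshSqrt x - coshSqrt y := by
  rw [coshSqrt_of_nonneg hx]
  linarith [exp_div_four_le_cosh_sub_cosh (Real.sqrt_nonneg y) hyx,
    (abs_le.mp (abs_coshSqrt_le_cosh y)).2]

lemma abs_coshSqrt_le_exp (x : ℝ) : |coshSqrt x| ≤ Real.exp √x :=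
  (abs_coshSqrt_le_cosh x).trans (cosh_le_exp_of_nonneg (Real.sqrt_nonneg x))

/-- The Laplace transform `∫₀^∞ e^{-zt} f(t) dt`. -/
def laplace (f : ℝ → ℂ) (z : ℂ) : ℂ := ∫ t in Set.Ioi (0 : ℝ), Complex.exp (-z * t) * f t

lemma integrable_cexp_neg_mul_sq_mul_cosh {z : ℂ} (hz : 0 < z.re) (k : ℂ) :
    Integrable fun p : ℝ ↦ Complex.exp (-z * p ^ 2) * Complex.cosh (k * p) := by
  have hsum := (integrable_cexp_quadratic hz k 0).add (integrable_cexp_quadratic hz (-k) 0)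
  refine (hsum.const_mul (1 / 2)).congr (ae_of_all _ fun p ↦ ?_)
  simp only [Pi.add_apply, add_zero, Complex.exp_add, Complex.cosh, neg_mul]
  ring

lemma integral_Ioi_cexp_neg_mul_sq_mul_cosh {z : ℂ} (hz : 0 < z.re) (k : ℂ) :
    ∫ p in Set.Ioi (0 : ℝ), Complex.exp (-z * p ^ 2) * Complex.cosh (k * p) =
      (π / z) ^ ((1 : ℂ) / 2) * Complex.exp (k ^ 2 / (4 * z)) / 2 := by
  let gauss (k : ℂ) (p : ℝ) : ℂ := Complex.exp (-z * p ^ 2 + k * p + 0)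
  have hint (k : ℂ) : Integrable (gauss k) := integrable_cexp_quadratic hz k 0
  have hreflect : ∫ p in Set.Iic (0 : ℝ), gauss k p = ∫ p in Set.Ioi (0 : ℝ), gauss (-k) p := by
    rw [← neg_zero, ← integral_comp_neg_Iic, neg_zero]
    congr! 2 with p
    simp [gauss]
  calc ∫ p in Set.Ioi (0 : ℝ), Complex.exp (-z * p ^ 2) * Complex.cosh (k * p)
      = ∫ p in Set.Ioi (0 : ℝ), (gauss k p + gauss (-k) p) / 2 := by
        congr! 2 with p
        simp only [gauss, add_zero, Complex.exp_add, Complex.cosh, neg_mul]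
        ring
    _ = (∫ p, gauss k p) / 2 := by
        rw [integral_div, integral_add (hint k).integrableOn (hint (-k)).integrableOn, ← hreflect,
          ← Set.compl_Ioi, integral_add_compl measurableSet_Ioi (hint k)]
    _ = _ := by
        rw [integral_cexp_quadratic (by simpa using hz) k 0, neg_neg, mul_neg, div_neg, zero_sub,
          neg_neg]

section LaplaceCoshSqrt

variable {z : ℂ} (k : ℝ)

lemma cexp_mul_coshSqrt_comp_sq (z : ℂ) {p : ℝ} (hp : 0 < p) :
    (2 * p ^ ((2 : ℝ) - 1)) •
      (Complex.exp (-z * (p ^ (2 : ℝ) : ℝ)) *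
        (((√(p ^ (2 : ℝ)))⁻¹ * coshSqrt (k * p ^ (2 : ℝ)) : ℝ) : ℂ)) =
      2 * (Complex.exp (-z * p ^ 2) * Complex.cosh ((k : ℂ) ^ ((1 : ℂ) / 2) * p)) := by
  have hk : ((k : ℂ) ^ ((1 : ℂ) / 2) * p) ^ 2 = ((k * p ^ 2 : ℝ) : ℂ) := by
    rw [mul_pow, one_div, Complex.cpow_ofNat_inv_pow]
    push_cast
    rfl
  have hp' : (p : ℂ) ≠ 0 := Complex.ofReal_ne_zero.mpr hp.ne'
  rw [show (2 : ℝ) - 1 = 1 by norm_num, Real.rpow_one, Real.rpow_two, Real.sqrt_sq hp.le,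
    Complex.ofReal_mul, ofReal_coshSqrt_of_sq_eq hk, Complex.real_smul]
  push_cast
  field_simp

lemma integrableOn_cexp_neg_mul_coshSqrt (hz : 0 < z.re) :
    IntegrableOn (fun t : ℝ ↦ Complex.exp (-z * t) * (((√t)⁻¹ * coshSqrt (k * t) : ℝ) : ℂ))
      (Set.Ioi 0) := by
  rw [← integrableOn_Ioi_comp_rpow_iff _ two_ne_zero, abs_two,
    integrableOn_congr_fun (s := Set.Ioi 0) (fun p hp ↦ cexp_mul_coshSqrt_comp_sq k z hp)
      measurableSet_Ioi]
  exact ((integrable_cexp_neg_mul_sq_mul_cosh hz _).const_mul 2).integrableOn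

lemma laplace_coshSqrt (hz : 0 < z.re) :
    laplace (fun t ↦ (((√t)⁻¹ * coshSqrt (k * t) : ℝ) : ℂ)) z =
      (π / z) ^ ((1 : ℂ) / 2) * Complex.exp (k / (4 * z)) := by
  rw [laplace, ← integral_comp_rpow_Ioi _ two_ne_zero, abs_two,
    setIntegral_congr_fun measurableSet_Ioi fun p hp ↦ cexp_mul_coshSqrt_comp_sq k z hp,
    integral_const_mul, integral_Ioi_cexp_neg_mul_sq_mul_cosh hz, one_div,
    Complex.cpow_ofNat_inv_pow]
  ring

end LaplaceCoshSqrt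

lemma cpow_half_mul {a b : ℂ} (ha : 0 < a.re) (hb : 0 < b.re) :
    (a * b) ^ ((1 : ℂ) / 2) = a ^ ((1 : ℂ) / 2) * b ^ ((1 : ℂ) / 2) := by
  have ha0 : a ≠ 0 := by rintro rfl; simp at ha
  have hb0 : b ≠ 0 := by rintro rfl; simp at hb
  have harg := abs_lt.mp (Complex.abs_arg_lt_pi_div_two_iff.mpr (.inl ha))
  have hbrg := abs_lt.mp (Complex.abs_arg_lt_pi_div_two_iff.mpr (.inl hb))
  rw [Complex.cpow_def_of_ne_zero (mul_ne_zero ha0 hb0), Complex.cpow_def_of_ne_zero ha0,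
    Complex.cpow_def_of_ne_zero hb0, ← Complex.exp_add, Complex.log_mul ha0 hb0, add_mul]
  constructor <;> linarith [harg.1, harg.2, hbrg.1, hbrg.2]

lemma ofReal_div_re_pos {c : ℝ} (hc : 0 < c) {z : ℂ} (hz : 0 < z.re) : 0 < ((c : ℂ) / z).re := by
  have : 0 < Complex.normSq z := Complex.normSq_pos.mpr (by rintro rfl; simp at hz)
  simp only [Complex.div_re, Complex.ofReal_re, Complex.ofReal_im, zero_mul, zero_div, add_zero]
  positivity

/-- The reduced vacuum character of one chiral half, `e^{Aβ} (1 - e^{-β})`. -/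
def vacChar (A : ℝ) (β : ℂ) : ℂ := Complex.exp (A * β) * (1 - Complex.exp (-β))

/-- The modular `S`-transform of the vacuum character. -/
def crossedVac (A : ℝ) (z : ℂ) : ℂ :=
  (2 * π / z) ^ ((1 : ℂ) / 2) * vacChar A (4 * π ^ 2 / z)

/-- The inverse Laplace transform of `crossedVac A`: the vacuum contribution to the density of
primaries at chiral weight `A + t` in the dual channel. -/
def vacDensity (A t : ℝ) : ℝ :=
  √2 / √t * (coshSqrt (16 * π ^ 2 * A * t) - coshSqrt (16 * π ^ 2 * (A - 1) * t))

section VacDensity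

variable {A t : ℝ}

lemma continuousOn_vacDensity : ContinuousOn (vacDensity A) (Set.Ioi 0) := by
  refine ContinuousOn.mul (continuousOn_const.div (by fun_prop) fun t ht ↦ ?_) ?_
  · exact (Real.sqrt_pos.mpr ht).ne'
  · exact ((continuous_coshSqrt.comp (by fun_prop)).sub
      (continuous_coshSqrt.comp (by fun_prop))).continuousOn

lemma vacDensity_eq (A t : ℝ) :
    vacDensity A t = √2 * ((√t)⁻¹ * coshSqrt (16 * π ^ 2 * A * t)) -
      √2 * ((√t)⁻¹ * coshSqrt (16 * π ^ 2 * (A - 1) * t)) := by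
  rw [vacDensity]
  ring

lemma integrableOn_cexp_neg_mul_vacDensity {z : ℂ} (hz : 0 < z.re) :
    IntegrableOn (fun t : ℝ ↦ Complex.exp (-z * t) * (vacDensity A t : ℂ)) (Set.Ioi 0) := by
  refine (((integrableOn_cexp_neg_mul_coshSqrt (16 * π ^ 2 * A) hz).const_mul (√2 : ℂ)).sub
    ((integrableOn_cexp_neg_mul_coshSqrt (16 * π ^ 2 * (A - 1)) hz).const_mul (√2 : ℂ))).congr
    (ae_of_all _ fun t ↦ ?_)
  simp only [vacDensity_eq, Pi.sub_apply]
  push_cast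
  ring

lemma laplace_vacDensity {z : ℂ} (hz : 0 < z.re) :
    laplace (fun t ↦ (vacDensity A t : ℂ)) z = crossedVac A z := by
  have hsqrt : (2 * π / z) ^ ((1 : ℂ) / 2) = √2 * (π / z) ^ ((1 : ℂ) / 2) := by
    rw [mul_div_assoc, cpow_half_mul (by norm_num) (ofReal_div_re_pos Real.pi_pos hz),
      Real.sqrt_eq_rpow, Complex.ofReal_cpow zero_le_two]
    norm_num
  have hexp (k : ℂ) : (16 * π ^ 2 * k : ℂ) / (4 * z) = k * (4 * π ^ 2 / z) := by
    field_simp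
    ring
  have hlin : laplace (fun t ↦ (vacDensity A t : ℂ)) z =
      √2 * laplace (fun t ↦ (((√t)⁻¹ * coshSqrt (16 * π ^ 2 * A * t) : ℝ) : ℂ)) z -
        √2 * laplace (fun t ↦ (((√t)⁻¹ * coshSqrt (16 * π ^ 2 * (A - 1) * t) : ℝ) : ℂ)) z := by
    simp only [laplace]
    rw [← integral_const_mul, ← integral_const_mul,
      ← integral_sub ((integrableOn_cexp_neg_mul_coshSqrt _ hz).const_mul _)
        ((integrableOn_cexp_neg_mul_coshSqrt _ hz).const_mul _)]
    congr! 2 with t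
    rw [vacDensity_eq]
    push_cast
    ring
  rw [hlin, laplace_coshSqrt _ hz, laplace_coshSqrt _ hz, crossedVac, vacChar, hsqrt]
  push_cast
  rw [hexp, hexp, sub_mul (A : ℂ), one_mul, sub_eq_add_neg ((A : ℂ) * _), Complex.exp_add]
  ring

lemma sqrt_le_vacDensity (hA : 0 < A) (ht : 0 < t) :
    √2 * (8 * π ^ 2 * min A 1) * √t ≤ vacDensity A t := by
  have hgap : 16 * π ^ 2 * A * t - max (16 * π ^ 2 * (A - 1) * t) 0 =
      2 * (8 * π ^ 2 * min A 1 * √t ^ 2) := by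
    rw [Real.sq_sqrt ht.le]
    rcases le_total A 1 with h | h
    · rw [min_eq_left h, max_eq_right (mul_nonpos_of_nonpos_of_nonneg
        (mul_nonpos_of_nonneg_of_nonpos (by positivity) (by linarith)) ht.le)]
      ring
    · rw [min_eq_right h, max_eq_left (mul_nonneg (mul_nonneg (by positivity) (by linarith)) ht.le)]
      ring
  have hcosh := sub_max_div_two_le_coshSqrt_sub (x := 16 * π ^ 2 * A * t)
    (y := 16 * π ^ 2 * (A - 1) * t) (by positivity) (by gcongr; linarith)
  rw [hgap, mul_div_cancel_left₀ _ two_ne_zero] at hcosh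
  calc √2 * (8 * π ^ 2 * min A 1) * √t
      = √2 / √t * (8 * π ^ 2 * min A 1 * √t ^ 2) := by field_simp
    _ ≤ vacDensity A t := by
      unfold vacDensity
      gcongr

lemma vacDensity_nonneg (hA : 0 < A) (ht : 0 < t) : 0 ≤ vacDensity A t :=
  le_trans (by positivity) (sqrt_le_vacDensity hA ht)

lemma sqrt_sixteen_mul_pi_sq_mul (x : ℝ) : √(16 * π ^ 2 * x) = 4 * π * √x := by
  rw [show 16 * π ^ 2 * x = (4 * π) ^ 2 * x by ring, Real.sqrt_mul (by positivity),
    Real.sqrt_sq (by positivity)]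

lemma vacDensity_le_exp (ht : 1 ≤ t) :
    vacDensity A t ≤ 4 * Real.exp (4 * π * √(A * t)) := by
  have hcosh (k : ℝ) (hk : k ≤ A) :
      |coshSqrt (16 * π ^ 2 * k * t)| ≤ Real.exp (4 * π * √(A * t)) := by
    refine (abs_coshSqrt_le_exp _).trans (Real.exp_le_exp.mpr ?_)
    rw [mul_assoc, sqrt_sixteen_mul_pi_sq_mul]
    gcongr
  have hsqrt : √2 / √t ≤ 2 := by
    rw [div_le_iff₀ (by positivity)]
    nlinarith [Real.one_le_sqrt.mpr ht, Real.sqrt_two_lt_three_halves]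
  calc vacDensity A t
      ≤ √2 / √t * (Real.exp (4 * π * √(A * t)) + Real.exp (4 * π * √(A * t))) := by
        unfold vacDensity
        gcongr
        linarith [(abs_le.mp (hcosh A le_rfl)).2, (abs_le.mp (hcosh (A - 1) (by linarith))).1]
    _ ≤ 2 * (Real.exp (4 * π * √(A * t)) + Real.exp (4 * π * √(A * t))) := by gcongr
    _ = 4 * Real.exp (4 * π * √(A * t)) := by ring

lemma eventually_exp_div_sqrt_le_vacDensity (hA : 0 < A) :
    ∀ᶠ t in atTop, Real.exp (4 * π * √(A * t)) / (4 * √t) ≤ vacDensity A t := by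
  have hslope : 0 < 4 * π * (√A - √(A - 1)) :=
    mul_pos (by positivity) (sub_pos.mpr ((Real.sqrt_lt_sqrt_iff_of_pos hA).mpr (by linarith)))
  have hlarge := (Real.tendsto_sqrt_atTop.const_mul_atTop hslope).eventually_ge_atTop 2
  filter_upwards [hlarge, eventually_gt_atTop 0] with t ht ht0
  have hcosh : Real.exp (4 * π * √(A * t)) / 4 ≤
      coshSqrt (16 * π ^ 2 * A * t) - coshSqrt (16 * π ^ 2 * (A - 1) * t) := by
    rw [← sqrt_sixteen_mul_pi_sq_mul, ← mul_assoc]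
    refine exp_sqrt_div_four_le_coshSqrt_sub (by positivity) ?_
    rw [mul_assoc, mul_assoc _ A, sqrt_sixteen_mul_pi_sq_mul, sqrt_sixteen_mul_pi_sq_mul,
      Real.sqrt_mul' _ ht0.le, Real.sqrt_mul' _ ht0.le]
    linarith
  calc Real.exp (4 * π * √(A * t)) / (4 * √t) = 1 / √t * (Real.exp (4 * π * √(A * t)) / 4) := by
        field_simp
    _ ≤ vacDensity A t := by
      unfold vacDensity
      gcongr
      exact Real.one_le_sqrt.mpr one_le_two

end VacDensity

section LaplaceInversion

variable {f g : ℝ → ℂ} {r v J : ℝ} {w : ℂ}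

lemma fourier_indicator_cexp_neg_mul (f : ℝ → ℂ) (r ξ : ℝ) :
    FourierTransform.fourier
        ((Set.Ioi 0).indicator fun t : ℝ ↦ Complex.exp (-(r : ℂ) * t) * f t) ξ =
      laplace f (r + (2 * π * ξ : ℝ) * I) := by
  rw [Real.fourier_eq', laplace, ← integral_indicator measurableSet_Ioi]
  congr 1 with t
  by_cases ht : t ∈ Set.Ioi (0 : ℝ)
  · simp only [Set.indicator_of_mem ht, smul_eq_mul, ← mul_assoc, ← Complex.exp_add,
      RCLike.inner_apply, conj_trivial]
    push_cast
    ring_nf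
  · simp only [Set.indicator_of_notMem ht, smul_zero]

lemma integral_cexp_mul_laplace
    (hf : IntegrableOn (fun t : ℝ ↦ Complex.exp (-(r : ℂ) * t) * f t) (Set.Ioi 0))
    (hF : Integrable fun θ : ℝ ↦ laplace f (r + θ * I)) (hv : 0 < v) (hfv : ContinuousAt f v) :
    ∫ θ : ℝ, Complex.exp (θ * v * I) * laplace f (r + θ * I) =
      2 * π * (Complex.exp (-r * v) * f v) := by
  set g : ℝ → ℂ := (Set.Ioi 0).indicator fun t : ℝ ↦ Complex.exp (-(r : ℂ) * t) * f t
  have hgF : FourierTransform.fourier g = fun ξ : ℝ ↦ laplace f (r + (2 * π * ξ : ℝ) * I) :=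
    funext fun ξ ↦ fourier_indicator_cexp_neg_mul f r ξ
  have hg : Integrable g := (integrable_indicator_iff measurableSet_Ioi).mpr hf
  have hgF_int : Integrable (FourierTransform.fourier g) :=
    hgF ▸ hF.comp_mul_left' (R := 2 * π) (by positivity)
  have hgv : ContinuousAt g v := by
    refine ContinuousAt.congr (f := fun t : ℝ ↦ Complex.exp (-(r : ℂ) * t) * f t) (by fun_prop) ?_
    filter_upwards [Ioi_mem_nhds hv] with t ht
    simp only [g, Set.indicator_of_mem ht]
  have hinv : ∫ ξ : ℝ, Complex.exp ((2 * π * ξ : ℝ) * v * I) *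
      laplace f (r + (2 * π * ξ : ℝ) * I) = Complex.exp (-r * v) * f v := by
    have := hg.fourierInv_fourier_eq hgF_int hgv
    rw [Real.fourierInv_eq', hgF] at this
    simp only [g, Set.indicator_of_mem (Set.mem_Ioi.mpr hv), smul_eq_mul, RCLike.inner_apply,
      conj_trivial] at this
    rw [← this]
    congr 1 with ξ
    push_cast
    ring_nf
  have hscale := Measure.integral_comp_mul_left
    (fun θ : ℝ ↦ Complex.exp (θ * v * I) * laplace f (r + θ * I)) (2 * π)
  rw [hinv, abs_of_pos (by positivity), Complex.real_smul] at hscale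
  rw [hscale, Complex.ofReal_inv, Complex.ofReal_mul, Complex.ofReal_ofNat,
    mul_inv_cancel_left₀ (mul_ne_zero two_ne_zero (Complex.ofReal_ne_zero.mpr Real.pi_ne_zero))]

lemma integral_cexp_mul_cexp_mul_laplace
    (hf : IntegrableOn (fun t : ℝ ↦ Complex.exp (-(r : ℂ) * t) * f t) (Set.Ioi 0))
    (hF : Integrable fun θ : ℝ ↦ laplace f (r + θ * I)) (hJv : 0 < J + v)
    (hfv : ContinuousAt f (J + v)) :
    ∫ θ : ℝ, Complex.exp (θ * J * I) * (Complex.exp (-(w - (r + θ * I)) * v) *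
        laplace f (r + θ * I)) =
      2 * π * (Complex.exp (-r * J) * (Complex.exp (-w * v) * f (J + v))) := by
  have hexp (θ : ℝ) : Complex.exp (θ * J * I) * (Complex.exp (-(w - (r + θ * I)) * v) *
      laplace f (r + θ * I)) = Complex.exp (-(w - r) * v) *
        (Complex.exp (θ * (J + v : ℝ) * I) * laplace f (r + θ * I)) := by
    simp only [← mul_assoc, ← Complex.exp_add]
    push_cast
    ring_nf
  rw [integral_congr_ae (ae_of_all _ hexp), integral_const_mul,
    integral_cexp_mul_laplace hf hF hJv hfv, mul_left_comm]
  simp only [← mul_assoc _ _ (f (J + v)), ← Complex.exp_add]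
  push_cast
  ring_nf

lemma integrable_cexp_mul_cexp_mul_laplace_mul
    (hf : IntegrableOn (fun t : ℝ ↦ Complex.exp (-(w - r) * t) * f t) (Set.Ioi 0))
    (hG : Integrable fun θ : ℝ ↦ laplace g (r + θ * I)) (J : ℝ) :
    Integrable (fun p : ℝ × ℝ ↦ Complex.exp (p.1 * J * I) *
        (Complex.exp (-(w - (r + p.1 * I)) * p.2) * laplace g (r + p.1 * I)) * f p.2)
      (volume.prod (volume.restrict (Set.Ioi (0 : ℝ)))) := by
  refine ((hG.mul_prod hf).bdd_mul (c := 1)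
    (f := fun p : ℝ × ℝ ↦ Complex.exp ((p.1 * (J + p.2) : ℝ) * I)) ?_ ?_).congr ?_
  · exact Continuous.aestronglyMeasurable (by fun_prop)
  · exact ae_of_all _ fun p ↦ (Complex.norm_exp_ofReal_mul_I _).le
  · refine ae_of_all _ fun ⟨θ, t⟩ ↦ ?_
    have hphase : Complex.exp ((θ * (J + t) : ℝ) * I) * Complex.exp (-(w - r) * t) =
        Complex.exp (θ * J * I) * Complex.exp (-(w - (r + θ * I)) * t) := by
      rw [← Complex.exp_add, ← Complex.exp_add]
      push_cast
      ring_nf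
    linear_combination laplace g (r + θ * I) * f t * hphase

lemma integral_cexp_mul_laplace_mul_laplace
    (hf : IntegrableOn (fun t : ℝ ↦ Complex.exp (-(w - r) * t) * f t) (Set.Ioi 0))
    (hg : IntegrableOn (fun t : ℝ ↦ Complex.exp (-(r : ℂ) * t) * g t) (Set.Ioi 0))
    (hG : Integrable fun θ : ℝ ↦ laplace g (r + θ * I)) (hgc : ContinuousOn g (Set.Ioi 0))
    (hJ : 0 ≤ J) :
    ∫ θ : ℝ, Complex.exp (θ * J * I) * (laplace f (w - (r + θ * I)) * laplace g (r + θ * I)) =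
      2 * π * Complex.exp (-r * J) * laplace (fun t ↦ f t * g (J + t)) w := by
  let kernel (θ t : ℝ) : ℂ := Complex.exp (θ * J * I) * (Complex.exp (-(w - (r + θ * I)) * t) *
    laplace g (r + θ * I)) * f t
  calc _ = ∫ θ : ℝ, ∫ t in Set.Ioi (0 : ℝ), kernel θ t := by
        congr 1 with θ
        have hkernel_eq (t : ℝ) : kernel θ t = Complex.exp (θ * J * I) * laplace g (r + θ * I) *
            (Complex.exp (-(w - (r + θ * I)) * t) * f t) := by
          simp only [kernel]
          ring
        simp only [hkernel_eq, integral_const_mul]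
        rw [← laplace]
        ring
    _ = ∫ t in Set.Ioi (0 : ℝ), ∫ θ : ℝ, kernel θ t :=
        integral_integral_swap (integrable_cexp_mul_cexp_mul_laplace_mul hf hG J)
    _ = ∫ t in Set.Ioi (0 : ℝ), 2 * π * Complex.exp (-r * J) *
          (Complex.exp (-w * t) * (f t * g (J + t))) := by
        refine setIntegral_congr_fun measurableSet_Ioi fun t (ht : 0 < t) ↦ ?_
        have hJt : 0 < J + t := add_pos_of_nonneg_of_pos hJ ht
        simp only [kernel]
        rw [integral_mul_const, integral_cexp_mul_cexp_mul_laplace hg hG hJt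
          (hgc.continuousAt (Ioi_mem_nhds hJt))]
        ring
    _ = _ := integral_const_mul _ _

end LaplaceInversion

section CrossedVacBounds

variable {A : ℝ} {z : ℂ}

lemma four_pi_sq_div_re (z : ℂ) : (4 * π ^ 2 / z : ℂ).re = 4 * π ^ 2 * z.re / ‖z‖ ^ 2 := by
  rw [show (4 * π ^ 2 : ℂ) = ((4 * π ^ 2 : ℝ) : ℂ) by push_cast; rfl, Complex.div_re,
    Complex.sq_norm]
  simp only [Complex.ofReal_re, Complex.ofReal_im, zero_mul, zero_div, add_zero]

lemma four_pi_sq_div_re_pos (hz : 0 < z.re) : 0 < (4 * π ^ 2 / z : ℂ).re := by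
  have hz0 : 0 < ‖z‖ := norm_pos_iff.mpr (by rintro rfl; simp at hz)
  rw [four_pi_sq_div_re]
  positivity

lemma four_pi_sq_div_re_le_div_re (hz : 0 < z.re) :
    (4 * π ^ 2 / z : ℂ).re ≤ 4 * π ^ 2 / z.re := by
  have hre : z.re ≤ ‖z‖ := Complex.re_le_norm z
  calc (4 * π ^ 2 / z : ℂ).re = 4 * π ^ 2 * z.re / ‖z‖ ^ 2 := four_pi_sq_div_re z
    _ ≤ 4 * π ^ 2 * z.re / z.re ^ 2 := by gcongr
    _ = 4 * π ^ 2 / z.re := by field_simp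

lemma four_pi_sq_div_re_le_of_half_le_re (hz : 1 / 2 ≤ z.re) :
    (4 * π ^ 2 / z : ℂ).re ≤ 8 * π ^ 2 := by
  refine (four_pi_sq_div_re_le_div_re (by linarith)).trans ?_
  rw [div_le_iff₀ (by linarith)]
  nlinarith [sq_nonneg π]

lemma norm_cpow_half (x : ℂ) : ‖x ^ ((1 : ℂ) / 2)‖ = √‖x‖ := by
  rw [show (1 : ℂ) / 2 = ((1 / 2 : ℝ) : ℂ) by push_cast; rfl, Complex.norm_cpow_real,
    Real.sqrt_eq_rpow]

lemma norm_one_sub_cexp_neg_le_two (hz : 0 ≤ z.re) : ‖1 - Complex.exp (-z)‖ ≤ 2 := by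
  have : Real.exp (-z.re) ≤ 1 := Real.exp_le_one_iff.mpr (by linarith)
  refine (norm_sub_le _ _).trans ?_
  rw [Complex.norm_exp, norm_one, Complex.neg_re]
  linarith

lemma norm_one_sub_cexp_neg_le_two_mul_norm (hz : 0 ≤ z.re) :
    ‖1 - Complex.exp (-z)‖ ≤ 2 * ‖z‖ := by
  rcases le_total ‖z‖ 1 with h | h
  · rw [norm_sub_rev]
    simpa using Complex.norm_exp_sub_one_le (x := -z) (by rwa [norm_neg])
  · linarith [norm_one_sub_cexp_neg_le_two hz]

lemma norm_vacChar_le (A : ℝ) (hz : 0 ≤ z.re) : ‖vacChar A z‖ ≤ Real.exp (A * z.re) * 2 := by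
  rw [vacChar, norm_mul, Complex.norm_exp, Complex.re_ofReal_mul]
  gcongr
  exact norm_one_sub_cexp_neg_le_two hz

lemma norm_crossedVac_le (A : ℝ) (hz : 0 < z.re) :
    ‖crossedVac A z‖ ≤
      √(2 * π) * (8 * π ^ 2) * Real.exp (A * (4 * π ^ 2 / z : ℂ).re) * ‖z‖ ^ (-(3 / 2 : ℝ)) := by
  have hz0 : 0 < ‖z‖ := norm_pos_iff.mpr (by rintro rfl; simp at hz)
  have hpow : ‖z‖ ^ (-(3 / 2 : ℝ)) = (√‖z‖)⁻¹ * ‖z‖⁻¹ := by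
    rw [show -(3 / 2 : ℝ) = -(1 / 2) + -1 by norm_num, Real.rpow_add hz0, Real.rpow_neg_one,
      Real.rpow_neg hz0.le, Real.sqrt_eq_rpow]
  have hnorm : ‖(4 * π ^ 2 / z : ℂ)‖ = 4 * π ^ 2 / ‖z‖ := by simp
  have hvac := norm_one_sub_cexp_neg_le_two_mul_norm (four_pi_sq_div_re_pos hz).le
  rw [hnorm] at hvac
  calc ‖crossedVac A z‖
      = √(2 * π) / √‖z‖ * (Real.exp (A * (4 * π ^ 2 / z : ℂ).re) *
          ‖1 - Complex.exp (-(4 * π ^ 2 / z))‖) := by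
        rw [crossedVac, vacChar, norm_mul, norm_mul, norm_cpow_half, Complex.norm_exp,
          Complex.re_ofReal_mul, ← Real.sqrt_div' _ hz0.le]
        simp [abs_of_pos Real.pi_pos]
    _ ≤ √(2 * π) / √‖z‖ *
          (Real.exp (A * (4 * π ^ 2 / z : ℂ).re) * (2 * (4 * π ^ 2 / ‖z‖))) := by gcongr
    _ = _ := by
        rw [hpow]
        ring

lemma norm_crossedVac_le_decay (hA : 0 ≤ A) (hz : 0 < z.re) {k B θ : ℝ}
    (hk : 1 + |θ| ≤ k * ‖z‖) (hB : (4 * π ^ 2 / z : ℂ).re ≤ B) :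
    ‖crossedVac A z‖ ≤ √(2 * π) * (8 * π ^ 2) * Real.exp (A * B) * k ^ (3 / 2 : ℝ) *
      (1 + ‖θ‖) ^ (-(3 / 2 : ℝ)) := by
  have hz0 : 0 < ‖z‖ := norm_pos_iff.mpr (by rintro rfl; simp at hz)
  have hθ : 0 < 1 + |θ| := by positivity
  have hk0 : 0 < k := pos_of_mul_pos_left (hθ.trans_le hk) hz0.le
  have hpow : ‖z‖ ^ (-(3 / 2 : ℝ)) ≤ k ^ (3 / 2 : ℝ) * (1 + ‖θ‖) ^ (-(3 / 2 : ℝ)) := calc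
    ‖z‖ ^ (-(3 / 2 : ℝ)) ≤ (k⁻¹ * (1 + |θ|)) ^ (-(3 / 2 : ℝ)) :=
      Real.rpow_le_rpow_of_nonpos (by positivity) ((inv_mul_le_iff₀ hk0).mpr hk) (by norm_num)
    _ = k ^ (3 / 2 : ℝ) * (1 + ‖θ‖) ^ (-(3 / 2 : ℝ)) := by
      rw [Real.mul_rpow (by positivity) hθ.le, Real.inv_rpow hk0.le, Real.rpow_neg hk0.le, inv_inv,
        Real.norm_eq_abs]
  refine (norm_crossedVac_le A hz).trans ?_
  rw [mul_assoc _ (k ^ _)]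
  gcongr

lemma norm_crossedVac_le_of_half_le_re (hA : 0 ≤ A) (hz : 1 / 2 ≤ z.re) :
    ‖crossedVac A z‖ ≤
      √(2 * π) * (8 * π ^ 2) * Real.exp (A * (8 * π ^ 2)) * 2 ^ (3 / 2 : ℝ) := by
  have hz0 : 0 < z.re := by linarith
  simpa using norm_crossedVac_le_decay hA hz0 (k := 2) (θ := 0)
    (by linarith [Complex.re_le_norm z, abs_zero (α := ℝ)]) (four_pi_sq_div_re_le_of_half_le_re hz)

lemma norm_crossedVac_le_of_pi_le_abs (hA : 0 ≤ A) {r θ : ℝ} (hr : 0 < r) (hr' : r ≤ 1 / 2)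
    (hθ : π ≤ |θ|) :
    ‖crossedVac A (r + θ * I)‖ ≤ √(2 * π) * (8 * π ^ 2) * Real.exp (A * 2) * 2 ^ (3 / 2 : ℝ) *
      (1 + ‖θ‖) ^ (-(3 / 2 : ℝ)) := by
  have hre : ((r : ℂ) + θ * I).re = r := by simp
  have him : |θ| ≤ ‖(r : ℂ) + θ * I‖ := by simpa using Complex.abs_im_le_norm ((r : ℂ) + θ * I)
  refine norm_crossedVac_le_decay hA (hre.symm ▸ hr) ?_ ?_
  · linarith [Real.pi_gt_three]
  · rw [four_pi_sq_div_re, hre]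
    calc 4 * π ^ 2 * r / ‖(r : ℂ) + θ * I‖ ^ 2 ≤ 4 * π ^ 2 * r / π ^ 2 := by
          gcongr
          exact hθ.trans him
      _ = 4 * r := by field_simp
      _ ≤ 2 := by linarith

lemma continuousAt_crossedVac (A : ℝ) (hz : 0 < z.re) : ContinuousAt (crossedVac A) z := by
  have hz0 : z ≠ 0 := by rintro rfl; simp at hz
  have hslit : 2 * (π : ℂ) / z ∈ Complex.slitPlane :=
    .inl (by simpa using ofReal_div_re_pos (c := 2 * π) (by positivity) hz)
  unfold crossedVac vacChar
  fun_prop (disch := assumption)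

lemma continuous_crossedVac_line (A : ℝ) {r : ℝ} (hr : 0 < r) :
    Continuous fun θ : ℝ ↦ crossedVac A (r + θ * I) :=
  continuous_iff_continuousAt.mpr fun θ ↦
    ContinuousAt.comp (f := fun θ : ℝ ↦ (r : ℂ) + θ * I)
      (continuousAt_crossedVac A (by simpa using hr)) (by fun_prop)

lemma integrable_crossedVac_line (hA : 0 ≤ A) {r : ℝ} (hr : 0 < r) :
    Integrable fun θ : ℝ ↦ crossedVac A (r + θ * I) := by
  have hdecay : Integrable fun θ : ℝ ↦ (1 + ‖θ‖) ^ (-(3 / 2 : ℝ)) :=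
    integrable_one_add_norm (by norm_num)
  refine Integrable.mono' (hdecay.const_mul (√(2 * π) * (8 * π ^ 2) *
      Real.exp (A * (4 * π ^ 2 / r)) * (1 / r + 1) ^ (3 / 2 : ℝ)))
    (continuous_crossedVac_line A hr).aestronglyMeasurable (ae_of_all _ fun θ ↦ ?_)
  have hre : ((r : ℂ) + θ * I).re = r := by simp
  have hr' : r ≤ ‖(r : ℂ) + θ * I‖ := by simpa using Complex.re_le_norm ((r : ℂ) + θ * I)
  have hθ : |θ| ≤ ‖(r : ℂ) + θ * I‖ := by simpa using Complex.abs_im_le_norm ((r : ℂ) + θ * I)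
  refine norm_crossedVac_le_decay hA (hre.symm ▸ hr) ?_ ?_
  · have : 1 ≤ 1 / r * ‖(r : ℂ) + θ * I‖ := by rwa [one_div, le_inv_mul_iff₀ hr, mul_one]
    linarith
  · simpa [hre] using four_pi_sq_div_re_le_div_re (z := r + θ * I) (hre.symm ▸ hr)

end CrossedVacBounds

lemma integral_cexp_mul_crossedVac_mul_crossedVac {A r J : ℝ} {w : ℂ} (hA : 0 ≤ A) (hr : 0 < r)
    (hw : r < w.re) (hJ : 0 ≤ J) :
    ∫ θ : ℝ, Complex.exp (θ * J * I) *
        (crossedVac A (w - (r + θ * I)) * crossedVac A (r + θ * I)) =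
      2 * π * Complex.exp (-r * J) *
        laplace (fun t ↦ (vacDensity A t : ℂ) * (vacDensity A (J + t) : ℂ)) w := by
  have hr' (θ : ℝ) : 0 < ((r : ℂ) + θ * I).re := by simpa using hr
  have hw' (θ : ℝ) : 0 < (w - ((r : ℂ) + θ * I)).re := by simpa using hw
  have hlaplace (θ : ℝ) :
      laplace (fun t ↦ (vacDensity A t : ℂ)) (r + θ * I) = crossedVac A (r + θ * I) :=
    laplace_vacDensity (hr' θ)
  rw [← integral_cexp_mul_laplace_mul_laplace (f := fun t ↦ (vacDensity A t : ℂ))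
    (g := fun t ↦ (vacDensity A t : ℂ)) (r := r)
    (integrableOn_cexp_neg_mul_vacDensity (by simpa using hw))
    (integrableOn_cexp_neg_mul_vacDensity (by simpa using hr))
    (by simpa only [hlaplace] using integrable_crossedVac_line hA hr)
    (Complex.continuous_ofReal.comp_continuousOn continuousOn_vacDensity) hJ]
  simp only [hlaplace, laplace_vacDensity (hw' _)]

/-- The contribution `∑_J ∫ e^{-βL h - βR (h + J)} dν_J(h)` of the spectrum to `Ztilde`. -/
def primarySum (ν : ℤ → Measure ℝ) (βL βR : ℂ) : ℂ :=
  ∑' J : ℤ, ∫ h : ℝ, Complex.exp (-βL * (h : ℂ) - βR * ((h : ℂ) + (J : ℂ))) ∂(ν J)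

/-- `primarySum` at real inverse temperatures, as a real number. -/
def realPrimarySum (ν : ℤ → Measure ℝ) (x y : ℝ) : ℝ :=
  ∑' J : ℤ, ∫ h : ℝ, Real.exp (-x * h - y * (h + (J : ℝ))) ∂(ν J)

section PrimarySum

variable {A T : ℝ} {ν : ℤ → Measure ℝ} {x y : ℝ}

lemma realPrimarySum_nonneg (ν : ℤ → Measure ℝ) (x y : ℝ) : 0 ≤ realPrimarySum ν x y :=
  tsum_nonneg fun _ ↦ integral_nonneg fun _ ↦ (Real.exp_pos _).le

lemma IsSpectrum.integrable_exp (hs : IsSpectrum T ν) (hx : 0 < x) (hy : 0 < y) (J : ℤ) :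
    Integrable (fun h : ℝ ↦ Real.exp (-x * h - y * (h + (J : ℝ)))) (ν J) := by
  refine ⟨by fun_prop, ?_⟩
  rw [hasFiniteIntegral_iff_ofReal (ae_of_all _ fun h ↦ (Real.exp_pos _).le)]
  exact (ENNReal.le_tsum J).trans_lt (hs.2 x y hx hy)

lemma IsSpectrum.summable_integral_exp (hs : IsSpectrum T ν) (hx : 0 < x) (hy : 0 < y) :
    Summable fun J : ℤ ↦ ∫ h : ℝ, Real.exp (-x * h - y * (h + (J : ℝ))) ∂(ν J) := by
  refine (ENNReal.summable_toReal (hs.2 x y hx hy).ne).congr fun J ↦ ?_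
  rw [integral_eq_lintegral_of_nonneg_ae (ae_of_all _ fun h ↦ (Real.exp_pos _).le) (by fun_prop)]

lemma norm_integral_cexp_le (μ : Measure ℝ) (βL βR : ℂ) (J : ℤ) :
    ‖∫ h : ℝ, Complex.exp (-βL * (h : ℂ) - βR * ((h : ℂ) + (J : ℂ))) ∂μ‖ ≤
      ∫ h : ℝ, Real.exp (-βL.re * h - βR.re * (h + (J : ℝ))) ∂μ := by
  refine (norm_integral_le_integral_norm _).trans_eq ?_
  congr! 2 with h
  simp [Complex.norm_exp]

lemma IsSpectrum.norm_primarySum_le (hs : IsSpectrum T ν) {βL βR : ℂ} (hL : 0 < βL.re)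
    (hR : 0 < βR.re) : ‖primarySum ν βL βR‖ ≤ realPrimarySum ν βL.re βR.re :=
  tsum_of_norm_bounded (hs.summable_integral_exp hL hR).hasSum fun J ↦
    norm_integral_cexp_le (ν J) βL βR J

lemma IsSpectrum.realPrimarySum_add_le (hs : IsSpectrum T ν) (hx : 0 < x) (hy : 0 < y) {p q : ℝ}
    (hp : 0 ≤ p) (hq : 0 ≤ q) :
    realPrimarySum ν (x + p) (y + q) ≤ Real.exp (-T * (p + q)) * realPrimarySum ν x y := by
  unfold realPrimarySum
  rw [← tsum_mul_left]
  refine Summable.tsum_le_tsum (fun J ↦ ?_)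
    (hs.summable_integral_exp (add_pos_of_pos_of_nonneg hx hp) (add_pos_of_pos_of_nonneg hy hq))
    ((hs.summable_integral_exp hx hy).mul_left _)
  rw [← integral_const_mul]
  refine integral_mono_ae (hs.integrable_exp (by positivity) (by positivity) J)
    ((hs.integrable_exp hx hy J).const_mul _) ?_
  have hgap : ∀ᵐ h ∂(ν J), T < h ∧ T < h + (J : ℝ) := hs.1 J
  filter_upwards [hgap] with h ⟨hT, hTJ⟩
  rw [← Real.exp_add]
  gcongr
  nlinarith [mul_nonneg hp (sub_nonneg.mpr hT.le), mul_nonneg hq (sub_nonneg.mpr hTJ.le)]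

lemma IsSpectrum.realPrimarySum_anti (hs : IsSpectrum T ν) (hT : 0 ≤ T) (hx : 0 < x) (hy : 0 < y)
    {x' y' : ℝ} (hxx' : x ≤ x') (hyy' : y ≤ y') :
    realPrimarySum ν x' y' ≤ realPrimarySum ν x y := by
  have hshift := hs.realPrimarySum_add_le hx hy (sub_nonneg.mpr hxx') (sub_nonneg.mpr hyy')
  rw [add_sub_cancel, add_sub_cancel] at hshift
  refine hshift.trans (mul_le_of_le_one_left (realPrimarySum_nonneg ν x y) ?_)
  rw [Real.exp_le_one_iff, neg_mul, neg_nonpos]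
  exact mul_nonneg hT (by linarith)

lemma Ztilde_eq_vacChar_mul_add (A : ℝ) (ν : ℤ → Measure ℝ) (βL βR : ℂ) :
    Ztilde A ν βL βR =
      vacChar A βL * vacChar A βR + Complex.exp (A * (βL + βR)) * primarySum ν βL βR := by
  rw [Ztilde, vacChar, vacChar, primarySum, mul_add (A : ℂ), Complex.exp_add]
  ring

lemma Ztilde_ofReal (A : ℝ) (ν : ℤ → Measure ℝ) (x y : ℝ) :
    Ztilde A ν x y = ((Real.exp (A * (x + y)) *
      ((1 - Real.exp (-x)) * (1 - Real.exp (-y)) + realPrimarySum ν x y) : ℝ) : ℂ) := by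
  unfold Ztilde realPrimarySum
  push_cast
  congr! 4 with J
  rw [← integral_complex_ofReal]
  push_cast
  rfl

lemma ModularInvariant.realPrimarySum_le (hmod : ModularInvariant A ν) (hA : 0 ≤ A) (hx : 0 < x)
    (hy : 0 < y) :
    realPrimarySum ν x y ≤ √(4 * π ^ 2 / (x * y)) *
      (Real.exp (A * (4 * π ^ 2 / x + 4 * π ^ 2 / y)) *
        (1 + realPrimarySum ν (4 * π ^ 2 / x) (4 * π ^ 2 / y))) := by
  have hvac {t : ℝ} (ht : 0 < t) : 0 ≤ 1 - Real.exp (-t) ∧ 1 - Real.exp (-t) ≤ 1 :=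
    ⟨sub_nonneg.mpr (Real.exp_le_one_iff.mpr (by linarith)), by linarith [Real.exp_pos (-t)]⟩
  have hreal : Real.exp (A * (x + y)) *
      ((1 - Real.exp (-x)) * (1 - Real.exp (-y)) + realPrimarySum ν x y) =
      √(4 * π ^ 2 / (x * y)) * (Real.exp (A * (4 * π ^ 2 / x + 4 * π ^ 2 / y)) *
        ((1 - Real.exp (-(4 * π ^ 2 / x))) * (1 - Real.exp (-(4 * π ^ 2 / y))) +
          realPrimarySum ν (4 * π ^ 2 / x) (4 * π ^ 2 / y))) := by
    have h := hmod x y (by simpa using hx) (by simpa using hy)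
    rw [show (4 * π ^ 2 / x : ℂ) = ((4 * π ^ 2 / x : ℝ) : ℂ) by push_cast; rfl,
      show (4 * π ^ 2 / y : ℂ) = ((4 * π ^ 2 / y : ℝ) : ℂ) by push_cast; rfl,
      show (4 * π ^ 2 / (x * y) : ℂ) = ((4 * π ^ 2 / (x * y) : ℝ) : ℂ) by push_cast; rfl,
      show (1 / 2 : ℂ) = ((1 / 2 : ℝ) : ℂ) by push_cast; rfl,
      Ztilde_ofReal, Ztilde_ofReal, ← Complex.ofReal_cpow (by positivity),
      ← Complex.ofReal_mul, ← Real.sqrt_eq_rpow] at h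
    exact Complex.ofReal_injective h
  have hsum : realPrimarySum ν x y ≤
      (1 - Real.exp (-x)) * (1 - Real.exp (-y)) + realPrimarySum ν x y :=
    le_add_of_nonneg_left (mul_nonneg (hvac hx).1 (hvac hy).1)
  calc realPrimarySum ν x y
      ≤ Real.exp (A * (x + y)) *
          ((1 - Real.exp (-x)) * (1 - Real.exp (-y)) + realPrimarySum ν x y) :=
        hsum.trans (le_mul_of_one_le_left ((realPrimarySum_nonneg ν x y).trans hsum)
          (Real.one_le_exp (by positivity)))
    _ = _ := hreal
    _ ≤ _ := by
      gcongr
      exact mul_le_one₀ (hvac (by positivity)).2 (hvac (by positivity)).1 (hvac (by positivity)).2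

lemma sqrt_four_pi_sq_div_mul_le {η : ℝ} (hη : 0 < η) (hx : 0 < x) (hy : 0 < y) :
    √(4 * π ^ 2 / (x * y)) ≤ π / η * Real.exp (η / x + η / y) := calc
  √(4 * π ^ 2 / (x * y)) ≤ π / x + π / y := by
    rw [Real.sqrt_le_left (by positivity)]
    have : (π / x + π / y) ^ 2 - 4 * π ^ 2 / (x * y) = (π / x - π / y) ^ 2 := by field_simp; ring
    linarith [sq_nonneg (π / x - π / y)]
  _ = π / η * (η / x + η / y) := by field_simp
  _ ≤ π / η * Real.exp (η / x + η / y) := by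
    gcongr
    linarith [Real.add_one_le_exp (η / x + η / y)]

lemma exists_realPrimarySum_le_exp (hA : 0 ≤ A) (hT : 0 ≤ T) (hs : IsSpectrum T ν)
    (hmod : ModularInvariant A ν) {B : ℝ} (hB : 4 * π ^ 2 * A < B) {X : ℝ} (hX : 0 < X) :
    ∃ C > 0, ∀ x y, 0 < x → x ≤ X → 0 < y → y ≤ 1 →
      realPrimarySum ν x y ≤ C * Real.exp (B / x + B / y) := by
  set η := B - 4 * π ^ 2 * A with hη
  have hη0 : 0 < η := sub_pos.mpr hB
  set S := 1 + realPrimarySum ν (4 * π ^ 2 / X) (4 * π ^ 2)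
  have hS0 : 0 < S := by linarith [realPrimarySum_nonneg ν (4 * π ^ 2 / X) (4 * π ^ 2)]
  refine ⟨π / η * S, by positivity, fun x y hx hxX hy hy1 ↦ ?_⟩
  have hdual := realPrimarySum_nonneg ν (4 * π ^ 2 / x) (4 * π ^ 2 / y)
  calc realPrimarySum ν x y
      ≤ √(4 * π ^ 2 / (x * y)) * (Real.exp (A * (4 * π ^ 2 / x + 4 * π ^ 2 / y)) *
          (1 + realPrimarySum ν (4 * π ^ 2 / x) (4 * π ^ 2 / y))) := hmod.realPrimarySum_le hA hx hy
    _ ≤ π / η * Real.exp (η / x + η / y) *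
          (Real.exp (A * (4 * π ^ 2 / x + 4 * π ^ 2 / y)) * S) := by
        gcongr
        · exact sqrt_four_pi_sq_div_mul_le hη0 hx hy
        · exact add_le_add_right (hs.realPrimarySum_anti hT (by positivity) (by positivity)
            (by gcongr) (le_div_self (by positivity) hy hy1)) 1
    _ = π / η * S * Real.exp (B / x + B / y) := by
        rw [show B / x + B / y = (η / x + η / y) + A * (4 * π ^ 2 / x + 4 * π ^ 2 / y) by
          rw [hη]; ring, Real.exp_add _ (A * _)]
        ring

lemma exists_exp_mul_realPrimarySum_le (hA : 0 ≤ A) (hT : 0 ≤ T) (hs : IsSpectrum T ν)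
    (hmod : ModularInvariant A ν) {B : ℝ} (hB : 4 * π ^ 2 * A < B) {X : ℝ} (hX : 0 < X) :
    ∃ C > 0, ∀ x y, 0 < x → x ≤ X → 0 < y →
      Real.exp (A * y) * realPrimarySum ν x y ≤
        C * Real.exp (B / x) * (Real.exp ((A - T) * y) + Real.exp (B / y)) := by
  obtain ⟨C, hC, hsmall⟩ := exists_realPrimarySum_le_exp hA hT hs hmod hB hX
  refine ⟨C * Real.exp (T + A + B), by positivity, fun x y hx hxX hy ↦ ?_⟩
  have : 0 ≤ B := le_trans (by positivity) hB.le
  rcases le_total y 1 with hy1 | hy1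
  · calc Real.exp (A * y) * realPrimarySum ν x y
        ≤ Real.exp (T + A + B) * (C * Real.exp (B / x + B / y)) := by
          gcongr
          · exact realPrimarySum_nonneg ν x y
          · nlinarith
          · exact hsmall x y hx hxX hy hy1
      _ = C * Real.exp (T + A + B) * Real.exp (B / x) * (0 + Real.exp (B / y)) := by
          rw [Real.exp_add (B / x)]
          ring
      _ ≤ _ := by gcongr; positivity
  · have hshift := hs.realPrimarySum_add_le hx one_pos le_rfl (sub_nonneg.mpr hy1)
    rw [add_zero, add_sub_cancel, zero_add] at hshift
    calc Real.exp (A * y) * realPrimarySum ν x y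
        ≤ Real.exp (A * y) * (Real.exp (-T * (y - 1)) * (C * Real.exp (B / x + B / 1))) := by
          gcongr
          exact hshift.trans (by gcongr; exact hsmall x 1 hx hxX one_pos le_rfl)
      _ = C * Real.exp (T + B) * Real.exp (B / x) * (Real.exp ((A - T) * y) + 0) := by
          rw [show (A - T) * y = A * y + -T * (y - 1) - T by ring, div_one, Real.exp_sub,
            Real.exp_add, Real.exp_add, Real.exp_add]
          field_simp
          ring
      _ ≤ _ := by
          gcongr
          · linarith
          · positivity

lemma exp_mul_primarySum_sub_crossedVac_eq (hmod : ModularInvariant A ν) {u z : ℂ}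
    (hu : 0 < u.re) (hz : 0 < z.re) :
    Complex.exp (A * (u + z)) * primarySum ν u z - crossedVac A u * crossedVac A z =
      (2 * π / u) ^ ((1 : ℂ) / 2) * (2 * π / z) ^ ((1 : ℂ) / 2) *
        (Complex.exp (A * (4 * π ^ 2 / u + 4 * π ^ 2 / z)) *
          primarySum ν (4 * π ^ 2 / u) (4 * π ^ 2 / z)) - vacChar A u * vacChar A z := by
  have h := hmod u z hu hz
  have hre {β : ℂ} (hβ : 0 < β.re) : 0 < (2 * π / β : ℂ).re := by
    simpa using ofReal_div_re_pos (c := 2 * π) (by positivity) hβ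
  rw [show (4 * π ^ 2 / (u * z) : ℂ) = 2 * π / u * (2 * π / z) by rw [div_mul_div_comm]; ring_nf,
    cpow_half_mul (hre hu) (hre hz), Ztilde_eq_vacChar_mul_add, Ztilde_eq_vacChar_mul_add] at h
  unfold crossedVac
  linear_combination h

lemma div_four_pi_sq_div_re (B : ℝ) (z : ℂ) :
    B / (4 * π ^ 2 / z : ℂ).re = B / (4 * π ^ 2) * (‖z‖ ^ 2 / z.re) := by
  rw [four_pi_sq_div_re, div_div_eq_mul_div, div_mul_div_comm]

lemma normSq_sub_div_re_le {w z : ℂ} (hw : w.re = 1) (hz : 0 ≤ z.re) (hz' : z.re ≤ 1 / 2)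
    (him : |z.im| ≤ π) : ‖w - z‖ ^ 2 / (w - z).re ≤ 1 + 4 * π ^ 2 + 4 * w.im ^ 2 := by
  have him_sq : z.im ^ 2 ≤ π ^ 2 := sq_le_sq' (abs_le.mp him).1 (abs_le.mp him).2
  rw [Complex.sq_norm, Complex.normSq_apply, Complex.sub_re, Complex.sub_im, hw,
    div_le_iff₀ (by linarith)]
  nlinarith [sq_nonneg (w.im + z.im), sq_nonneg w.im, sq_nonneg π]

lemma normSq_div_re_le {z : ℂ} (hz : 0 < z.re) (hz' : z.re ≤ 1 / 2) (him : |z.im| ≤ π) :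
    ‖z‖ ^ 2 / z.re ≤ 1 / 2 + π ^ 2 / z.re := by
  have him_sq : z.im ^ 2 ≤ π ^ 2 := sq_le_sq' (abs_le.mp him).1 (abs_le.mp him).2
  rw [Complex.sq_norm, Complex.normSq_apply, add_div, mul_self_div_self, ← sq]
  gcongr

lemma sub_mul_four_pi_sq_div_re_le (hz : 0 < z.re) (hA : 0 ≤ A) (hT : 0 ≤ T) :
    (A - T) * (4 * π ^ 2 / z : ℂ).re ≤ (4 * π ^ 2 * A - 2 * π ^ 2 * min A T) / z.re := by
  have : 0 ≤ min A T := le_min hA hT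
  calc (A - T) * (4 * π ^ 2 / z : ℂ).re
      ≤ (A - min A T) * (4 * π ^ 2 / z.re) :=
        mul_le_mul (by linarith [min_le_right A T]) (four_pi_sq_div_re_le_div_re hz)
          (four_pi_sq_div_re_pos hz).le (sub_nonneg.mpr (min_le_left A T))
    _ = (4 * π ^ 2 * A - 4 * π ^ 2 * min A T) / z.re := by ring
    _ ≤ (4 * π ^ 2 * A - 2 * π ^ 2 * min A T) / z.re := by
      gcongr
      norm_num

/- In the dual channel the gap `T` lowers the vacuum exponent `4π²A / r` for `z` near the real
axis, and away from it `‖z‖² / r` is at most about `π² / r`, a quarter of what is allowed. -/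
lemma exists_exp_mul_realPrimarySum_dual_le (hA : 0 < A) (hT : 0 < T) (hs : IsSpectrum T ν)
    (hmod : ModularInvariant A ν) :
    ∃ C > 0, ∃ d > 0, d < 4 * π ^ 2 * A ∧ ∀ w z : ℂ, w.re = 1 → 0 < z.re → z.re ≤ 1 / 2 →
      |z.im| ≤ π →
      Real.exp (A * (4 * π ^ 2 / z : ℂ).re) *
          realPrimarySum ν (4 * π ^ 2 / (w - z) : ℂ).re (4 * π ^ 2 / z : ℂ).re ≤
        C * Real.exp ((4 * π ^ 2 * A - d) / z.re + 5 * A * w.im ^ 2) := by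
  obtain ⟨C, hC, hbound⟩ := exists_exp_mul_realPrimarySum_le hA.le hT.le hs hmod
    (B := 5 * π ^ 2 * A) (by nlinarith [mul_pos (pow_pos pi_pos 2) hA]) (X := 8 * π ^ 2)
    (by positivity)
  have : 0 < min A T := lt_min hA hT
  refine ⟨C * Real.exp (A * (5 / 4 * (1 + 4 * π ^ 2))) * (1 + Real.exp (A * (5 / 8))),
    by positivity, 2 * π ^ 2 * min A T, by positivity,
    by nlinarith [min_le_left A T, pow_pos pi_pos 2], fun w z hw hz hz' him ↦ ?_⟩
  have hu : 1 / 2 ≤ (w - z).re := by rw [Complex.sub_re]; linarith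
  set M := (4 * π ^ 2 * A - 2 * π ^ 2 * min A T) / z.re with hM
  have hleft : 5 * π ^ 2 * A / (4 * π ^ 2 / (w - z) : ℂ).re ≤
      A * (5 / 4 * (1 + 4 * π ^ 2)) + 5 * A * w.im ^ 2 := by
    have := mul_le_mul_of_nonneg_left (normSq_sub_div_re_le hw hz.le hz' him)
      (show 0 ≤ A * (5 / 4) by positivity)
    rw [div_four_pi_sq_div_re, show 5 * π ^ 2 * A / (4 * π ^ 2) = A * (5 / 4) by field_simp]
    linarith
  have hgap : (A - T) * (4 * π ^ 2 / z : ℂ).re ≤ M := sub_mul_four_pi_sq_div_re_le hz hA.le hT.le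
  have hcusp : 5 * π ^ 2 * A / (4 * π ^ 2 / z : ℂ).re ≤ M + A * (5 / 8) := calc
    _ = A * (5 / 4) * (‖z‖ ^ 2 / z.re) := by rw [div_four_pi_sq_div_re]; field_simp
    _ ≤ A * (5 / 4) * (1 / 2 + π ^ 2 / z.re) := by gcongr; exact normSq_div_re_le hz hz' him
    _ = 5 / 4 * π ^ 2 * A / z.re + A * (5 / 8) := by ring
    _ ≤ M + A * (5 / 8) := by
      rw [hM]
      gcongr
      nlinarith [min_le_left A T, pow_pos pi_pos 2]
  refine (hbound _ _ (four_pi_sq_div_re_pos (by linarith)) (four_pi_sq_div_re_le_of_half_le_re hu)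
    (four_pi_sq_div_re_pos hz)).trans ?_
  calc _ ≤ C * Real.exp (A * (5 / 4 * (1 + 4 * π ^ 2)) + 5 * A * w.im ^ 2) *
        (Real.exp M + Real.exp (M + A * (5 / 8))) := by gcongr
    _ = _ := by
      rw [Real.exp_add, Real.exp_add, Real.exp_add]
      ring

lemma sqrt_div_le_mul_exp_div {c d r : ℝ} (hc : 0 ≤ c) (hd : 0 < d) (hr : 0 < r) :
    √(c / r) ≤ √(c / d) * Real.exp (d / r) := by
  rw [show c / r = c / d * (d / r) by field_simp, Real.sqrt_mul (by positivity)]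
  gcongr
  rw [Real.sqrt_le_left (Real.exp_pos _).le, ← Real.exp_nat_mul]
  have : 0 < d / r := by positivity
  push_cast
  linarith [Real.add_one_le_exp (2 * (d / r))]

lemma norm_two_pi_div_cpow_half_le {z : ℂ} {r : ℝ} (hr : 0 < r) (hz : r ≤ z.re) :
    ‖(2 * π / z : ℂ) ^ ((1 : ℂ) / 2)‖ ≤ √(2 * π / r) := by
  rw [norm_cpow_half, show (2 * π : ℂ) = ((2 * π : ℝ) : ℂ) by push_cast; rfl, norm_div,
    Complex.norm_of_nonneg (by positivity)]
  gcongr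
  exact hz.trans (Complex.re_le_norm z)

lemma norm_vacChar_mul_vacChar_le (A : ℝ) {u z : ℂ} (hu : 0 ≤ u.re) (hz : 0 ≤ z.re) :
    ‖vacChar A u * vacChar A z‖ ≤ Real.exp (A * (u + z).re) * 4 := calc
  _ ≤ Real.exp (A * u.re) * 2 * (Real.exp (A * z.re) * 2) := by
    rw [norm_mul]
    gcongr
    · exact norm_vacChar_le A hu
    · exact norm_vacChar_le A hz
  _ = _ := by
    rw [Complex.add_re, mul_add, Real.exp_add]
    ring

lemma IsSpectrum.norm_exp_mul_primarySum_dual_le (hs : IsSpectrum T ν) (hA : 0 ≤ A) {u z : ℂ}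
    (hu : 1 / 2 ≤ u.re) (hz : 0 < z.re) :
    ‖Complex.exp (A * (4 * π ^ 2 / u + 4 * π ^ 2 / z)) *
        primarySum ν (4 * π ^ 2 / u) (4 * π ^ 2 / z)‖ ≤
      Real.exp (A * (8 * π ^ 2)) * (Real.exp (A * (4 * π ^ 2 / z : ℂ).re) *
        realPrimarySum ν (4 * π ^ 2 / u : ℂ).re (4 * π ^ 2 / z : ℂ).re) := by
  rw [norm_mul, Complex.norm_exp, Complex.re_ofReal_mul, Complex.add_re, mul_add, Real.exp_add,
    mul_assoc]
  gcongr
  · exact four_pi_sq_div_re_le_of_half_le_re hu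
  · exact hs.norm_primarySum_le (four_pi_sq_div_re_pos (by linarith)) (four_pi_sq_div_re_pos hz)

lemma exists_norm_primarySum_sub_crossedVac_le (hA : 0 < A) (hT : 0 < T) (hs : IsSpectrum T ν)
    (hmod : ModularInvariant A ν) :
    ∃ C > 0, ∃ d > 0, d < 4 * π ^ 2 * A ∧ ∀ w z : ℂ, w.re = 1 → 0 < z.re → z.re ≤ 1 / 2 →
      |z.im| ≤ π →
      ‖Complex.exp (A * w) * primarySum ν (w - z) z - crossedVac A (w - z) * crossedVac A z‖ ≤
        C * Real.exp ((4 * π ^ 2 * A - d) / z.re + 5 * A * w.im ^ 2) := by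
  obtain ⟨C, hC, d, hd, hdA, hdual⟩ := exists_exp_mul_realPrimarySum_dual_le hA hT hs hmod
  refine ⟨√(2 * π / (1 / 2)) * √(2 * π / (d / 2)) * Real.exp (A * (8 * π ^ 2)) * C +
    Real.exp A * 4, by positivity, d / 2, by positivity, by linarith,
    fun w z hw hz hz' him ↦ ?_⟩
  have hu : 1 / 2 ≤ (w - z).re := by rw [Complex.sub_re]; linarith
  set E := Real.exp ((4 * π ^ 2 * A - d / 2) / z.re + 5 * A * w.im ^ 2) with hE
  have hE1 : 1 ≤ E := Real.one_le_exp
    (add_nonneg (div_nonneg (by linarith) hz.le) (by positivity))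
  have hEd : Real.exp (d / 2 / z.re) *
      Real.exp ((4 * π ^ 2 * A - d) / z.re + 5 * A * w.im ^ 2) = E := by
    rw [hE, ← Real.exp_add]
    ring_nf
  have hnonvac := (hs.norm_exp_mul_primarySum_dual_le hA.le hu hz).trans
    (mul_le_mul_of_nonneg_left (hdual w z hw hz hz' him) (Real.exp_pos _).le)
  have hvac := norm_vacChar_mul_vacChar_le A (u := w - z) (by linarith) hz.le
  rw [sub_add_cancel, hw, mul_one] at hvac
  have heq := exp_mul_primarySum_sub_crossedVac_eq hmod (u := w - z) (by linarith) hz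
  rw [sub_add_cancel] at heq
  rw [heq]
  refine (norm_sub_le _ _).trans ?_
  rw [norm_mul, norm_mul]
  calc _ ≤ √(2 * π / (1 / 2)) * (√(2 * π / (d / 2)) * Real.exp (d / 2 / z.re)) *
        (Real.exp (A * (8 * π ^ 2)) *
          (C * Real.exp ((4 * π ^ 2 * A - d) / z.re + 5 * A * w.im ^ 2))) + Real.exp A * 4 * 1 := by
        rw [mul_one]
        gcongr
        · exact norm_two_pi_div_cpow_half_le one_half_pos hu
        · exact (norm_two_pi_div_cpow_half_le hz le_rfl).trans
            (sqrt_div_le_mul_exp_div (by positivity) (by positivity) hz)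
    _ = √(2 * π / (1 / 2)) * √(2 * π / (d / 2)) * Real.exp (A * (8 * π ^ 2)) * C * E +
        Real.exp A * 4 * 1 := by
        rw [← hEd]
        ring
    _ ≤ _ := by rw [add_mul]; gcongr

end PrimarySum

section FourierCoefficients

lemma norm_cexp_mul_mul_I (x y : ℝ) : ‖Complex.exp (x * y * I)‖ = 1 := by
  rw [← Complex.ofReal_mul, Complex.norm_exp_ofReal_mul_I]

lemma integral_cexp_int_mul_I (n : ℤ) :
    ∫ θ in (-π)..π, Complex.exp (n * I * θ) = if n = 0 then 2 * (π : ℂ) else 0 := by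
  split_ifs with h
  · subst h
    simp [two_mul]
  · have hn : (n : ℂ) * I ≠ 0 := mul_ne_zero (by exact_mod_cast h) Complex.I_ne_zero
    have hperiod : Complex.exp (n * I * π) = Complex.exp (n * I * ((-π : ℝ) : ℂ)) := by
      rw [Complex.exp_eq_exp_iff_exists_int]
      exact ⟨n, by push_cast; ring⟩
    rw [integral_exp_mul_complex hn, hperiod, sub_self, zero_div]

variable {c : ℤ → ℂ}

lemma continuous_tsum_cexp_mul (hc : Summable fun k ↦ ‖c k‖) :
    Continuous fun θ : ℝ ↦ ∑' k : ℤ, Complex.exp (θ * (-k : ℝ) * I) * c k :=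
  continuous_tsum (fun k ↦ by fun_prop) hc fun k θ ↦ by
    rw [norm_mul, norm_cexp_mul_mul_I, one_mul]

lemma integral_cexp_mul_tsum_cexp_mul (hc : Summable fun k ↦ ‖c k‖) (J : ℤ) :
    ∫ θ in (-π)..π, Complex.exp (θ * (J : ℝ) * I) *
      ∑' k : ℤ, Complex.exp (θ * (-k : ℝ) * I) * c k = 2 * π * c J := by
  have hππ : -π ≤ π := by linarith [Real.pi_pos]
  have hterm (k : ℤ) : ∫ θ in Set.Ioc (-π) π, Complex.exp (θ * (J : ℝ) * I) *
      (Complex.exp (θ * (-k : ℝ) * I) * c k) = if k = J then 2 * (π : ℂ) * c J else 0 := by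
    have hexp (θ : ℝ) : Complex.exp (θ * (J : ℝ) * I) * (Complex.exp (θ * (-k : ℝ) * I) * c k) =
        Complex.exp ((J - k : ℤ) * I * θ) * c k := by
      rw [← mul_assoc, ← Complex.exp_add]
      push_cast
      ring_nf
    simp_rw [hexp]
    rw [integral_mul_const, ← intervalIntegral.integral_of_le hππ, integral_cexp_int_mul_I]
    rcases eq_or_ne k J with rfl | hkJ
    · simp
    · rw [if_neg (sub_ne_zero.mpr hkJ.symm), if_neg hkJ, zero_mul]
  simp_rw [← tsum_mul_left]
  rw [intervalIntegral.integral_of_le hππ, ← integral_tsum_of_summable_integral_norm]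
  · simp_rw [hterm]
    exact tsum_ite_eq J _
  · exact fun k ↦ Continuous.integrableOn_Ioc (by fun_prop)
  · simp only [norm_mul, norm_cexp_mul_mul_I, one_mul, integral_const, smul_eq_mul]
    exact hc.mul_left _

end FourierCoefficients

section SpinProjection

variable {A T : ℝ} {ν : ℤ → Measure ℝ} {r : ℝ} {w : ℂ}

lemma primarySum_sub_line (ν : ℤ → Measure ℝ) (w : ℂ) (r θ : ℝ) :
    primarySum ν (w - (r + θ * I)) (r + θ * I) =
      ∑' k : ℤ, Complex.exp (θ * (-k : ℝ) * I) *
        ∫ h : ℝ, Complex.exp (-(w - r) * h - r * (h + k)) ∂(ν k) := by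
  simp_rw [← integral_const_mul, ← Complex.exp_add, primarySum]
  congr! 4
  push_cast
  ring_nf

lemma IsSpectrum.summable_norm_integral_cexp (hs : IsSpectrum T ν) (hr : 0 < r) (hw : r < w.re) :
    Summable fun k : ℤ ↦ ‖∫ h : ℝ, Complex.exp (-(w - r) * h - r * (h + k)) ∂(ν k)‖ :=
  Summable.of_nonneg_of_le (fun _ ↦ norm_nonneg _)
    (fun k ↦ norm_integral_cexp_le (ν k) (w - r) r k)
    (hs.summable_integral_exp (by simpa using hw) (by simpa using hr))

lemma IsSpectrum.continuous_primarySum_sub_line (hs : IsSpectrum T ν) (hr : 0 < r)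
    (hw : r < w.re) :
    Continuous fun θ : ℝ ↦ primarySum ν (w - (r + θ * I)) (r + θ * I) := by
  simp_rw [primarySum_sub_line]
  exact continuous_tsum_cexp_mul (hs.summable_norm_integral_cexp hr hw)

lemma IsSpectrum.integral_cexp_mul_primarySum (hs : IsSpectrum T ν) (hr : 0 < r)
    (hw : r < w.re) (J : ℤ) :
    ∫ θ in (-π)..π, Complex.exp (θ * (J : ℝ) * I) *
        primarySum ν (w - (r + θ * I)) (r + θ * I) =
      2 * π * Complex.exp (-r * (J : ℝ)) * ∫ h : ℝ, Complex.exp (-w * h) ∂(ν J) := by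
  simp_rw [primarySum_sub_line]
  rw [integral_cexp_mul_tsum_cexp_mul (hs.summable_norm_integral_cexp hr hw),
    mul_assoc _ (Complex.exp _), ← integral_const_mul (Complex.exp _)]
  simp_rw [← Complex.exp_add]
  congr! 4
  push_cast
  ring

lemma norm_integral_sub_intervalIntegral_le {f : ℝ → ℂ} {g : ℝ → ℝ} {a : ℝ} (ha : 0 ≤ a)
    (hf : Integrable f) (hg : Integrable g) (hg0 : ∀ θ, 0 ≤ g θ)
    (hfg : ∀ θ, a ≤ |θ| → ‖f θ‖ ≤ g θ) :
    ‖(∫ θ, f θ) - ∫ θ in (-a)..a, f θ‖ ≤ ∫ θ, g θ := by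
  rw [intervalIntegral.integral_of_le (by linarith),
    ← integral_add_compl measurableSet_Ioc hf, add_sub_cancel_left]
  calc _ ≤ ∫ θ in (Set.Ioc (-a) a)ᶜ, ‖f θ‖ := norm_integral_le_integral_norm _
    _ ≤ ∫ θ in (Set.Ioc (-a) a)ᶜ, g θ := by
      refine setIntegral_mono_on hf.norm.integrableOn hg.integrableOn measurableSet_Ioc.compl
        fun θ hθ ↦ hfg θ ?_
      contrapose! hθ
      rw [Set.notMem_compl_iff]
      exact ⟨(abs_lt.mp hθ).1, (abs_lt.mp hθ).2.le⟩
    _ ≤ ∫ θ, g θ := setIntegral_le_integral hg (ae_of_all _ hg0)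

lemma continuous_crossedVac_mul_crossedVac_line (A : ℝ) (hr : 0 < r) (hw : r < w.re) :
    Continuous fun θ : ℝ ↦ crossedVac A (w - (r + θ * I)) * crossedVac A (r + θ * I) := by
  refine Continuous.mul ?_ (continuous_crossedVac_line A hr)
  refine continuous_iff_continuousAt.mpr fun θ ↦
    ContinuousAt.comp (f := fun θ : ℝ ↦ w - (r + θ * I))
      (continuousAt_crossedVac A (by simpa using hw)) (by fun_prop)

lemma integrable_cexp_mul_crossedVac_mul_crossedVac (hA : 0 ≤ A) (hr : 0 < r) (hr' : r ≤ 1 / 2)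
    (hw : w.re = 1) (J : ℝ) :
    Integrable fun θ : ℝ ↦ Complex.exp (θ * J * I) *
      (crossedVac A (w - (r + θ * I)) * crossedVac A (r + θ * I)) := by
  have hcont := continuous_crossedVac_mul_crossedVac_line A hr (w := w) (by linarith)
  refine ((integrable_crossedVac_line hA hr).norm.const_mul
    (√(2 * π) * (8 * π ^ 2) * Real.exp (A * (8 * π ^ 2)) * 2 ^ (3 / 2 : ℝ))).mono'
    (Continuous.aestronglyMeasurable (by fun_prop)) (ae_of_all _ fun θ ↦ ?_)
  rw [norm_mul, norm_cexp_mul_mul_I, one_mul, norm_mul]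
  gcongr
  exact norm_crossedVac_le_of_half_le_re hA (by simp [hw]; linarith)

lemma exists_norm_integral_crossedVac_tail_le (hA : 0 ≤ A) :
    ∃ K ≥ 0, ∀ (w : ℂ) (r J : ℝ), w.re = 1 → 0 < r → r ≤ 1 / 2 →
      ‖(∫ θ : ℝ, Complex.exp (θ * J * I) *
          (crossedVac A (w - (r + θ * I)) * crossedVac A (r + θ * I))) -
        ∫ θ in (-π)..π, Complex.exp (θ * J * I) *
          (crossedVac A (w - (r + θ * I)) * crossedVac A (r + θ * I))‖ ≤ K := by
  have hdecay : Integrable fun θ : ℝ ↦ (1 + ‖θ‖) ^ (-(3 / 2 : ℝ)) :=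
    integrable_one_add_norm (by norm_num)
  refine ⟨_, integral_nonneg fun θ ↦ ?_, fun w r J hw hr hr' ↦
    norm_integral_sub_intervalIntegral_le pi_pos.le
      (integrable_cexp_mul_crossedVac_mul_crossedVac hA hr hr' hw J)
      (hdecay.const_mul ((√(2 * π) * (8 * π ^ 2) * Real.exp (A * (8 * π ^ 2)) * 2 ^ (3 / 2 : ℝ)) *
        (√(2 * π) * (8 * π ^ 2) * Real.exp (A * 2) * 2 ^ (3 / 2 : ℝ))))
      (fun θ ↦ by positivity) fun θ hθ ↦ ?_⟩
  · positivity
  · rw [norm_mul, norm_cexp_mul_mul_I, one_mul, norm_mul, mul_assoc]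
    gcongr
    · exact norm_crossedVac_le_of_half_le_re hA (by simp [hw]; linarith)
    · exact norm_crossedVac_le_of_pi_le_abs hA hr hr' hθ

lemma exists_norm_intervalIntegral_primarySum_sub_crossedVac_le (hA : 0 < A) (hT : 0 < T)
    (hs : IsSpectrum T ν) (hmod : ModularInvariant A ν) :
    ∃ C > 0, ∃ d > 0, d < 4 * π ^ 2 * A ∧ ∀ (w : ℂ) (r J : ℝ), w.re = 1 → 0 < r → r ≤ 1 / 2 →
      ‖Complex.exp (A * w) * (∫ θ in (-π)..π, Complex.exp (θ * J * I) *
          primarySum ν (w - (r + θ * I)) (r + θ * I)) -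
        ∫ θ in (-π)..π, Complex.exp (θ * J * I) *
          (crossedVac A (w - (r + θ * I)) * crossedVac A (r + θ * I))‖ ≤
        2 * π * (C * Real.exp ((4 * π ^ 2 * A - d) / r + 5 * A * w.im ^ 2)) := by
  obtain ⟨C, hC, d, hd, hdA, hdiff⟩ := exists_norm_primarySum_sub_crossedVac_le hA hT hs hmod
  refine ⟨C, hC, d, hd, hdA, fun w r J hw hr hr' ↦ ?_⟩
  have hprim := hs.continuous_primarySum_sub_line hr (w := w) (by linarith)
  have hvac := continuous_crossedVac_mul_crossedVac_line A hr (w := w) (by linarith)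
  rw [← intervalIntegral.integral_const_mul, ← intervalIntegral.integral_sub
    (Continuous.intervalIntegrable (by fun_prop) _ _)
    (Continuous.intervalIntegrable (by fun_prop) _ _)]
  refine (intervalIntegral.norm_integral_le_of_norm_le_const fun θ hθ ↦ ?_).trans_eq
    (b := C * Real.exp ((4 * π ^ 2 * A - d) / r + 5 * A * w.im ^ 2) * |π - -π|) ?_
  · rw [Set.uIoc_of_le (by linarith [Real.pi_pos])] at hθ
    rw [mul_left_comm, ← mul_sub, norm_mul, norm_cexp_mul_mul_I, one_mul]
    simpa using hdiff w (r + θ * I) hw (by simpa using hr) (by simpa using hr')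
      (by simpa using abs_le.mpr ⟨hθ.1.le, hθ.2⟩)
  · rw [sub_neg_eq_add, ← two_mul, abs_of_pos (by positivity), mul_comm]

lemma exists_norm_integral_sub_laplace_le (hA : 0 < A) (hT : 0 < T)
    (hs : IsSpectrum T ν) (hmod : ModularInvariant A ν) :
    ∃ C > 0, ∃ d > 0, ∀ (J : ℤ) (w : ℂ) (r : ℝ), 0 ≤ J → w.re = 1 → 0 < r → r ≤ 1 / 2 →
      ‖(∫ h : ℝ, Complex.exp (-w * (h - A)) ∂(ν J)) -
        laplace (fun t ↦ (vacDensity A t : ℂ) * (vacDensity A (J + t) : ℂ)) w‖ ≤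
        C * Real.exp (r * J + (4 * π ^ 2 * A - d) / r + 5 * A * w.im ^ 2) := by
  obtain ⟨C, hC, d, hd, hdA, hcircle⟩ :=
    exists_norm_intervalIntegral_primarySum_sub_crossedVac_le hA hT hs hmod
  obtain ⟨K, hK, htail⟩ := exists_norm_integral_crossedVac_tail_le hA.le
  refine ⟨C + K, by positivity, d, hd, fun J w r hJ hw hr hr' ↦ ?_⟩
  set P := ∫ h : ℝ, Complex.exp (-w * (h - A)) ∂(ν J) with hP
  set Q := laplace (fun t ↦ (vacDensity A t : ℂ) * (vacDensity A (J + t) : ℂ)) w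
  set E := Real.exp ((4 * π ^ 2 * A - d) / r + 5 * A * w.im ^ 2) with hE
  have hE1 : 1 ≤ E := Real.one_le_exp
    (add_nonneg (div_nonneg (by linarith) hr.le) (by positivity))
  have hPshift : P = Complex.exp (A * w) * ∫ h : ℝ, Complex.exp (-w * h) ∂(ν J) := by
    rw [hP, ← integral_const_mul]
    simp_rw [← Complex.exp_add]
    congr! 3
    ring
  have hprim := hs.integral_cexp_mul_primarySum hr (w := w) (by linarith) J
  have hvac := integral_cexp_mul_crossedVac_mul_crossedVac hA.le hr (w := w) (J := J)
    (by linarith) (by exact_mod_cast hJ)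
  have hnorm : 2 * π * Real.exp (-r * J) * ‖P - Q‖ ≤ 2 * π * (C * E) + K := calc
    _ = ‖2 * π * Complex.exp (-r * (J : ℝ)) * (P - Q)‖ := by
      simp [Complex.norm_exp, abs_of_pos Real.pi_pos]
    _ ≤ _ := by
      have hsum := norm_sub_le_of_le (hcircle w r J hw hr hr') (htail w r J hw hr hr')
      rw [hprim, hvac] at hsum
      refine (congrArg norm ?_).trans_le hsum
      rw [hPshift]
      ring
  have hKE : K ≤ 2 * π * (K * E) := by
    nlinarith [Real.pi_gt_three, mul_nonneg hK (sub_nonneg.mpr hE1)]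
  calc ‖P - Q‖ = Real.exp (r * J) * (Real.exp (-r * J) * ‖P - Q‖) := by
        rw [← mul_assoc, ← Real.exp_add]
        simp
    _ ≤ Real.exp (r * J) * ((C + K) * E) := by
        refine mul_le_mul_of_nonneg_left ?_ (Real.exp_pos _).le
        refine le_of_mul_le_mul_left (a := 2 * π) ?_ (by positivity)
        linarith
    _ = _ := by
        rw [hE, add_assoc (r * J), Real.exp_add (r * J)]
        ring

end SpinProjection

section GaussianTest

open ProbabilityTheory
open scoped NNReal

variable {v : ℝ≥0} {Λ δ η x : ℝ}

lemma gaussianReal_real_setOf_lt_abs_le (hv : 0 < v) (hΛ : 0 ≤ Λ) :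
    (gaussianReal 0 v).real {s : ℝ | Λ < |s|} ≤ 2 * Real.exp (-(Λ ^ 2 / (2 * v))) := by
  have hmgf (t : ℝ) : mgf id (gaussianReal 0 v) t = Real.exp (0 * t + v * t ^ 2 / 2) :=
    mgf_gaussianReal Measure.map_id t
  have hright := measure_ge_le_exp_mul_mgf (X := id) Λ (t := Λ / v) (by positivity)
    (integrable_exp_mul_gaussianReal (μ := 0) (v := v) _)
  have hleft := measure_le_le_exp_mul_mgf (X := id) (-Λ) (t := -(Λ / v))
    (by rw [neg_nonpos]; positivity) (integrable_exp_mul_gaussianReal (μ := 0) (v := v) _)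
  rw [hmgf, ← Real.exp_add] at hright hleft
  rw [show -(Λ / v) * Λ + (0 * (Λ / v) + v * (Λ / v) ^ 2 / 2) = -(Λ ^ 2 / (2 * v)) by
    field_simp; ring] at hright
  rw [show - -(Λ / v) * -Λ + (0 * -(Λ / v) + v * (-(Λ / v)) ^ 2 / 2) = -(Λ ^ 2 / (2 * v)) by
    field_simp; ring] at hleft
  have hsub : {s : ℝ | Λ < |s|} ⊆ {s : ℝ | Λ ≤ id s} ∪ {s : ℝ | id s ≤ -Λ} := fun s hs ↦
    (lt_abs.mp hs).imp le_of_lt fun h ↦ (le_neg_of_le_neg h.le : s ≤ -Λ)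
  calc (gaussianReal 0 v).real {s : ℝ | Λ < |s|}
      ≤ (gaussianReal 0 v).real {s : ℝ | Λ ≤ id s} +
          (gaussianReal 0 v).real {s : ℝ | id s ≤ -Λ} :=
        (measureReal_mono hsub).trans (measureReal_union_le _ _)
    _ ≤ 2 * Real.exp (-(Λ ^ 2 / (2 * v))) := by linarith

variable (P Q : Measure ℝ) [IsFiniteMeasure P] [IsFiniteMeasure Q]

lemma integral_gaussianReal_cexp_mul_charFun (v : ℝ≥0) (x : ℝ) :
    ∫ s : ℝ, Complex.exp (s * (-x : ℝ) * I) * charFun P s ∂(gaussianReal 0 v) =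
      ((∫ t, Real.exp (-(v * (t - x) ^ 2 / 2)) ∂P : ℝ) : ℂ) := by
  have hshift (s : ℝ) : Complex.exp (s * (-x : ℝ) * I) * charFun P s =
      ∫ t : ℝ, Complex.exp ((t - x : ℝ) * s * I) ∂P := by
    rw [charFun_apply_real, ← integral_const_mul]
    simp_rw [← Complex.exp_add]
    congr! 3
    push_cast
    ring
  simp_rw [hshift]
  rw [integral_integral_swap, ← integral_complex_ofReal]
  · congr! 2 with t
    rw [← charFun_apply_real, charFun_gaussianReal, Complex.ofReal_exp]
    push_cast
    ring_nf
  · refine (integrable_const (1 : ℝ)).mono' (Continuous.aestronglyMeasurable ?_)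
      (ae_of_all _ fun p ↦ (norm_cexp_mul_mul_I _ _).le)
    unfold Function.uncurry
    fun_prop

lemma integrable_gaussianReal_cexp_mul_charFun (v : ℝ≥0) (x : ℝ) :
    Integrable (fun s : ℝ ↦ Complex.exp (s * (-x : ℝ) * I) * charFun P s) (gaussianReal 0 v) := by
  refine (integrable_const (P.real Set.univ)).mono'
    (.mul (Continuous.aestronglyMeasurable (by fun_prop))
      stronglyMeasurable_charFun.aestronglyMeasurable) (ae_of_all _ fun s ↦ ?_)
  rw [norm_mul, norm_cexp_mul_mul_I, one_mul]
  exact norm_charFun_le s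

lemma abs_integral_exp_sub_integral_exp_le (hv : 0 < v) (hΛ : 0 ≤ Λ)
    (h : ∀ s, |s| ≤ Λ → ‖charFun P s - charFun Q s‖ ≤ η) (x : ℝ) :
    |∫ t, Real.exp (-(v * (t - x) ^ 2 / 2)) ∂P - ∫ t, Real.exp (-(v * (t - x) ^ 2 / 2)) ∂Q| ≤
      η + (P.real Set.univ + Q.real Set.univ) * (2 * Real.exp (-(Λ ^ 2 / (2 * v)))) := by
  have hmeas : MeasurableSet {s : ℝ | Λ < |s|} := measurableSet_lt measurable_const (by fun_prop)
  have hbound (s : ℝ) : ‖Complex.exp (s * (-x : ℝ) * I) * charFun P s -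
      Complex.exp (s * (-x : ℝ) * I) * charFun Q s‖ ≤
      η + {s : ℝ | Λ < |s|}.indicator (fun _ ↦ P.real Set.univ + Q.real Set.univ) s := by
    rw [← mul_sub, norm_mul, norm_cexp_mul_mul_I, one_mul]
    by_cases hs : Λ < |s|
    · have hη : 0 ≤ η := (norm_nonneg _).trans (h 0 (by simpa using hΛ))
      rw [Set.indicator_of_mem (by exact hs)]
      exact le_add_of_nonneg_of_le hη
        (norm_sub_le_of_le (norm_charFun_le (μ := P) s) (norm_charFun_le (μ := Q) s))
    · rw [Set.indicator_of_notMem (by exact hs), add_zero]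
      exact h s (not_lt.mp hs)
  rw [← Real.norm_eq_abs, ← Complex.norm_real, Complex.ofReal_sub,
    ← integral_gaussianReal_cexp_mul_charFun, ← integral_gaussianReal_cexp_mul_charFun,
    ← integral_sub (integrable_gaussianReal_cexp_mul_charFun P v x)
      (integrable_gaussianReal_cexp_mul_charFun Q v x)]
  have hindicator := (integrable_const (μ := gaussianReal 0 v)
    (P.real Set.univ + Q.real Set.univ)).indicator hmeas
  refine (norm_integral_le_of_norm_le ((integrable_const η).add hindicator)
    (ae_of_all _ hbound)).trans ?_
  rw [integral_add' (integrable_const _) hindicator, integral_indicator_const _ hmeas,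
    integral_const, probReal_univ, one_smul, smul_eq_mul, mul_comm]
  gcongr
  exact gaussianReal_real_setOf_lt_abs_le hv hΛ

lemma integral_exp_le_of_measure_Ioo_eq_zero (v : ℝ≥0) (hδ : 0 ≤ δ)
    (hP : P (Set.Ioo (x - δ) (x + δ)) = 0) :
    ∫ t, Real.exp (-(v * (t - x) ^ 2 / 2)) ∂P ≤
      Real.exp (-(v * δ ^ 2 / 2)) * P.real Set.univ := by
  refine (Real.le_norm_self _).trans (norm_integral_le_of_norm_le_const ?_)
  filter_upwards [measure_eq_zero_iff_ae_notMem.mp hP] with t ht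
  have hδt : δ ≤ |t - x| := by
    contrapose! ht
    exact ⟨by linarith [(abs_lt.mp ht).1], by linarith [(abs_lt.mp ht).2]⟩
  rw [Real.norm_of_nonneg (Real.exp_pos _).le]
  rw [← sq_abs (t - x)]
  gcongr

lemma integral_exp_le_of_charFun_close (hv : 0 < v) (hΛ : 0 ≤ Λ) (hδ : 0 ≤ δ)
    (h : ∀ s, |s| ≤ Λ → ‖charFun P s - charFun Q s‖ ≤ η)
    (hP : P (Set.Ioo (x - δ) (x + δ)) = 0) :
    ∫ t, Real.exp (-(v * (t - x) ^ 2 / 2)) ∂Q ≤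
      η + (2 * Q.real Set.univ + η) * (2 * Real.exp (-(Λ ^ 2 / (2 * v)))) +
        Real.exp (-(v * δ ^ 2 / 2)) * (Q.real Set.univ + η) := by
  have hmass : P.real Set.univ ≤ Q.real Set.univ + η := by
    have h0 := h 0 (by simpa using hΛ)
    rw [charFun_zero, charFun_zero, ← Complex.ofReal_sub, Complex.norm_real,
      Real.norm_eq_abs] at h0
    linarith [le_abs_self (P.real Set.univ - Q.real Set.univ)]
  calc ∫ t, Real.exp (-(v * (t - x) ^ 2 / 2)) ∂Q
      ≤ η + (P.real Set.univ + Q.real Set.univ) * (2 * Real.exp (-(Λ ^ 2 / (2 * v)))) +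
          Real.exp (-(v * δ ^ 2 / 2)) * P.real Set.univ := by
        have hclose := (abs_le.mp (abs_integral_exp_sub_integral_exp_le P Q hv hΛ h x)).1
        linarith [integral_exp_le_of_measure_Ioo_eq_zero P v hδ hP]
    _ ≤ _ := by
        have htotal : P.real Set.univ + Q.real Set.univ ≤ 2 * Q.real Set.univ + η := by linarith
        gcongr

end GaussianTest

/-- The vacuum contribution to the density of spin-`J` primaries at `h = A + t`, damped by
`e^{-t}`. -/
def crossedDensity (A J t : ℝ) : ℝ := Real.exp (-t) * (vacDensity A t * vacDensity A (J + t))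

/-- The measure on `(0, ∞)` with density `crossedDensity A J`. -/
def crossedMeasure (A J : ℝ) : Measure ℝ :=
  (volume.restrict (Set.Ioi 0)).withDensity fun t ↦ ENNReal.ofReal (crossedDensity A J t)

/-- The measure `μ` in the variable `t = h - A`, damped by `e^{-t}`. Its characteristic function is
the Laplace transform of the shifted measure on the line of real part `1`. -/
def dampedShift (A : ℝ) (μ : Measure ℝ) : Measure ℝ :=
  (μ.withDensity fun h ↦ ENNReal.ofReal (Real.exp (-(h - A)))).map fun h ↦ h - A

section CrossedMeasure

variable {A J t : ℝ}

lemma crossedDensity_nonneg (hA : 0 < A) (hJ : 0 ≤ J) (ht : 0 < t) : 0 ≤ crossedDensity A J t :=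
  mul_nonneg (Real.exp_pos _).le
    (mul_nonneg (vacDensity_nonneg hA ht) (vacDensity_nonneg hA (by linarith)))

lemma continuousOn_crossedDensity (A : ℝ) (hJ : 0 ≤ J) :
    ContinuousOn (crossedDensity A J) (Set.Ioi 0) := by
  have hshift : Set.MapsTo (fun t ↦ J + t) (Set.Ioi 0) (Set.Ioi 0) := fun t ht ↦
    add_pos_of_nonneg_of_pos hJ ht
  exact .mul (by fun_prop)
    (continuousOn_vacDensity.mul (continuousOn_vacDensity.comp (by fun_prop) hshift))

lemma integrableOn_exp_mul_vacDensity (hA : 0 < A) :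
    IntegrableOn (fun t ↦ Real.exp (-(t / 2)) * vacDensity A t) (Set.Ioi 0) := by
  refine (integrableOn_cexp_neg_mul_vacDensity (A := A) (z := (1 / 2 : ℝ))
    (by simp)).norm.congr ?_
  filter_upwards [ae_restrict_mem measurableSet_Ioi] with t ht
  rw [norm_mul, Complex.norm_real, Real.norm_of_nonneg (vacDensity_nonneg hA ht),
    ← Complex.ofReal_neg, ← Complex.ofReal_mul, Complex.norm_exp_ofReal]
  ring_nf

lemma sqrt_mul_add_le (hA : 0 ≤ A) (hJ : 0 ≤ J) (ht : 0 ≤ t) :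
    4 * π * √(A * (J + t)) ≤ 4 * π * √(A * J) + (8 * π ^ 2 * A + t / 2) := by
  have hsub : √(A * (J + t)) ≤ √(A * J) + √(A * t) := by
    rw [Real.sqrt_le_left (by positivity), add_sq, Real.sq_sqrt (by positivity),
      Real.sq_sqrt (by positivity)]
    linarith [mul_nonneg (Real.sqrt_nonneg (A * J)) (Real.sqrt_nonneg (A * t))]
  have hamgm : 4 * π * √(A * t) ≤ 8 * π ^ 2 * A + t / 2 := by
    rw [Real.sqrt_mul hA]
    nlinarith [sq_nonneg (√t - 4 * π * √A), Real.sq_sqrt hA, Real.sq_sqrt ht]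
  nlinarith [Real.pi_pos]

lemma crossedDensity_le (hA : 0 < A) (hJ : 1 ≤ J) (ht : 0 < t) :
    crossedDensity A J t ≤ 4 * Real.exp (8 * π ^ 2 * A) * Real.exp (4 * π * √(A * J)) *
      (Real.exp (-(t / 2)) * vacDensity A t) := by
  have hρ := vacDensity_nonneg hA ht
  calc crossedDensity A J t
      ≤ Real.exp (-t) * (vacDensity A t *
          (4 * Real.exp (4 * π * √(A * J) + (8 * π ^ 2 * A + t / 2)))) := by
        unfold crossedDensity
        gcongr
        exact (vacDensity_le_exp (by linarith)).trans (by
          gcongr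
          exact sqrt_mul_add_le hA.le (by linarith) ht.le)
    _ = _ := by
        rw [show -t = -(t / 2) + -(t / 2) by ring, Real.exp_add, Real.exp_add, Real.exp_add,
          Real.exp_neg (t / 2)]
        field_simp

lemma integrableOn_crossedDensity (hA : 0 < A) (hJ : 1 ≤ J) :
    IntegrableOn (crossedDensity A J) (Set.Ioi 0) := by
  refine ((integrableOn_exp_mul_vacDensity hA).const_mul
    (4 * Real.exp (8 * π ^ 2 * A) * Real.exp (4 * π * √(A * J)))).mono'
    ((continuousOn_crossedDensity A (by linarith)).aestronglyMeasurable measurableSet_Ioi) ?_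
  filter_upwards [ae_restrict_mem measurableSet_Ioi] with t ht
  rw [Real.norm_of_nonneg (crossedDensity_nonneg hA (by linarith) ht)]
  exact crossedDensity_le hA hJ ht

lemma isFiniteMeasure_crossedMeasure (hA : 0 < A) (hJ : 1 ≤ J) :
    IsFiniteMeasure (crossedMeasure A J) :=
  isFiniteMeasure_withDensity_ofReal (integrableOn_crossedDensity hA hJ).2

lemma integral_crossedMeasure {E : Type*} [NormedAddCommGroup E] [NormedSpace ℝ E]
    (hA : 0 < A) (hJ : 0 ≤ J) (f : ℝ → E) :
    ∫ t, f t ∂(crossedMeasure A J) = ∫ t in Set.Ioi 0, crossedDensity A J t • f t := by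
  rw [crossedMeasure, integral_withDensity_eq_integral_toReal_smul₀
    ((continuousOn_crossedDensity A hJ).aemeasurable measurableSet_Ioi).ennreal_ofReal
    (ae_of_all _ fun t ↦ ENNReal.ofReal_lt_top)]
  refine setIntegral_congr_fun measurableSet_Ioi fun t ht ↦ ?_
  simp only [ENNReal.toReal_ofReal (crossedDensity_nonneg hA hJ ht)]

lemma exists_crossedMeasure_real_univ_le (hA : 0 < A) :
    ∃ C, ∀ J, 1 ≤ J → (crossedMeasure A J).real Set.univ ≤ C * Real.exp (4 * π * √(A * J)) := by
  refine ⟨4 * Real.exp (8 * π ^ 2 * A) *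
    ∫ t in Set.Ioi 0, Real.exp (-(t / 2)) * vacDensity A t, fun J hJ ↦ ?_⟩
  calc (crossedMeasure A J).real Set.univ
      = ∫ t in Set.Ioi 0, crossedDensity A J t := by
        simpa using integral_crossedMeasure hA (zero_le_one.trans hJ) fun _ ↦ (1 : ℝ)
    _ ≤ ∫ t in Set.Ioi 0, 4 * Real.exp (8 * π ^ 2 * A) * Real.exp (4 * π * √(A * J)) *
          (Real.exp (-(t / 2)) * vacDensity A t) :=
        setIntegral_mono_on (integrableOn_crossedDensity hA hJ)
          ((integrableOn_exp_mul_vacDensity hA).const_mul _) measurableSet_Ioi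
          fun t ht ↦ crossedDensity_le hA hJ ht
    _ = _ := by
        rw [integral_const_mul]
        ring

lemma charFun_crossedMeasure (hA : 0 < A) (hJ : 0 ≤ J) (s : ℝ) :
    charFun (crossedMeasure A J) s =
      laplace (fun t ↦ (vacDensity A t : ℂ) * (vacDensity A (J + t) : ℂ)) (1 - s * I) := by
  rw [charFun_apply_real, integral_crossedMeasure hA hJ, laplace]
  congr! 2 with t
  rw [crossedDensity, Complex.real_smul, Complex.ofReal_mul, Complex.ofReal_exp, mul_right_comm,
    ← Complex.exp_add]
  push_cast
  ring_nf

lemma exists_le_crossedDensity (hA : 0 < A) {X : ℝ} (hX : 0 < X) :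
    ∃ c > 0, ∀ᶠ J in atTop, ∀ t, 0 < t → t ≤ X →
      c * Real.exp (4 * π * √(A * J)) / J * √t ≤ crossedDensity A J t := by
  refine ⟨Real.exp (-X) * (√2 * (8 * π ^ 2 * min A 1)) / (4 * (X + 1)), by positivity, ?_⟩
  filter_upwards [eventually_forall_ge_atTop.mpr (eventually_exp_div_sqrt_le_vacDensity hA),
    eventually_ge_atTop 1] with J hlower hJ t ht htX
  have hshift : Real.exp (4 * π * √(A * J)) / (4 * ((X + 1) * J)) ≤ vacDensity A (J + t) := by
    refine le_trans ?_ (hlower (J + t) (by linarith))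
    have hsqrt : √(J + t) ≤ (X + 1) * J := by
      have hsum : J + t ≤ (X + 1) * J := by nlinarith
      rw [Real.sqrt_le_left (by positivity)]
      exact hsum.trans (le_self_pow₀ (by nlinarith) two_ne_zero)
    have : 0 < √(J + t) := Real.sqrt_pos.mpr (by linarith)
    gcongr
    linarith
  calc _ = Real.exp (-X) * (√2 * (8 * π ^ 2 * min A 1) * √t *
          (Real.exp (4 * π * √(A * J)) / (4 * ((X + 1) * J)))) := by
        field_simp
    _ ≤ crossedDensity A J t := by
        have hρ := vacDensity_nonneg hA ht
        unfold crossedDensity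
        gcongr
        exact sqrt_le_vacDensity hA ht

lemma mul_le_crossedMeasure_real_Icc {k y z : ℝ} (hA : 0 < A) (hJ : 1 ≤ J) (hk : 0 ≤ k)
    (hy : 0 < y) (h : ∀ t ∈ Set.Icc y z, k ≤ crossedDensity A J t) :
    k * (z - y) ≤ (crossedMeasure A J).real (Set.Icc y z) := by
  have := isFiniteMeasure_crossedMeasure hA hJ
  have hsub : Set.Icc y z ⊆ Set.Ioi 0 := fun t ht ↦ hy.trans_le ht.1
  rw [measureReal_def, ← ENNReal.ofReal_le_iff_le_toReal (measure_ne_top _ _), crossedMeasure,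
    withDensity_apply _ measurableSet_Icc, Measure.restrict_restrict measurableSet_Icc,
    Set.inter_eq_left.mpr hsub, ENNReal.ofReal_mul hk, ← Real.volume_Icc,
    ← setLIntegral_const]
  exact setLIntegral_mono' measurableSet_Icc fun t ht ↦ ENNReal.ofReal_le_ofReal (h t ht)

lemma exp_neg_half_mul_measureReal_Icc_le (Q : Measure ℝ) [IsFiniteMeasure Q] {v : ℝ} (hv : 1 ≤ v)
    (x : ℝ) : Real.exp (-(1 / 2)) * Q.real (Set.Icc x (x + 1 / v)) ≤
      ∫ t, Real.exp (-(v * (t - x) ^ 2 / 2)) ∂Q := by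
  have hsub : Set.Icc x (x + 1 / v) ⊆
      {t | Real.exp (-(1 / 2)) ≤ Real.exp (-(v * (t - x) ^ 2 / 2))} := by
    intro t ht
    have hle : v * (t - x) ^ 2 ≤ 1 := calc
      _ ≤ v * (1 / v) ^ 2 := by
        gcongr
        · linarith [ht.1]
        · linarith [ht.2]
      _ = 1 / v := by field_simp
      _ ≤ 1 := div_le_one_of_le₀ hv (by positivity)
    exact Real.exp_le_exp.mpr (by linarith)
  refine (mul_le_mul_of_nonneg_left (measureReal_mono hsub) (Real.exp_pos _).le).trans
    (mul_meas_ge_le_integral_of_nonneg (ae_of_all _ fun t ↦ (Real.exp_pos _).le) ?_ _)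
  refine (integrable_const (1 : ℝ)).mono' (by fun_prop) (ae_of_all _ fun t ↦ ?_)
  rw [Real.norm_of_nonneg (Real.exp_pos _).le, Real.exp_le_one_iff, neg_nonpos]
  positivity

lemma exists_le_integral_exp_crossedMeasure (hA : 0 < A) {X : ℝ} (hX : 0 ≤ X) :
    ∃ c > 0, ∀ᶠ J in atTop, ∀ x v : ℝ, 0 ≤ x → x ≤ X → 1 ≤ v →
      c * Real.exp (4 * π * √(A * J)) / (J * v ^ 2) ≤
        ∫ t, Real.exp (-(v * (t - x) ^ 2 / 2)) ∂(crossedMeasure A J) := by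
  obtain ⟨c, hc, hlower⟩ := exists_le_crossedDensity hA (X := X + 1) (by positivity)
  refine ⟨Real.exp (-(1 / 2)) * c / 4, by positivity, ?_⟩
  filter_upwards [hlower, eventually_ge_atTop 1] with J hlower hJ x v hx hxX hv
  have := isFiniteMeasure_crossedMeasure hA hJ
  have hv1 : 1 / v ≤ 1 := div_le_one_of_le₀ hv (by positivity)
  have hv2 : 1 / (2 * v) = 1 / v / 2 := by ring
  set k := c * Real.exp (4 * π * √(A * J)) / J * (1 / (2 * v)) with hk
  have hdensity : ∀ t ∈ Set.Icc (x + 1 / (2 * v)) (x + 1 / v), k ≤ crossedDensity A J t := by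
    intro t ht
    have ht0 : 1 / (2 * v) ≤ t := by linarith [ht.1]
    refine le_trans ?_ (hlower t (lt_of_lt_of_le (by positivity) ht0) (by linarith [ht.2]))
    rw [hk]
    gcongr
    refine Real.le_sqrt_of_sq_le ((sq_le (by positivity) ?_).trans ht0)
    linarith
  calc _ = Real.exp (-(1 / 2)) * (k * (x + 1 / v - (x + 1 / (2 * v)))) := by
        rw [hk]
        field_simp
        ring
    _ ≤ Real.exp (-(1 / 2)) * (crossedMeasure A J).real (Set.Icc x (x + 1 / v)) := by
        gcongr
        refine (mul_le_crossedMeasure_real_Icc hA hJ (by positivity) (by positivity)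
          hdensity).trans (measureReal_mono (Set.Icc_subset_Icc_left ?_))
        exact le_add_of_nonneg_right (by positivity)
    _ ≤ _ := exp_neg_half_mul_measureReal_Icc_le _ hv x

end CrossedMeasure

section DampedShift

variable {A : ℝ} {μ : Measure ℝ}

lemma isFiniteMeasure_dampedShift (hμ : Integrable (fun h ↦ Real.exp (-(h - A))) μ) :
    IsFiniteMeasure (dampedShift A μ) := by
  have := isFiniteMeasure_withDensity_ofReal hμ.2
  unfold dampedShift
  infer_instance

lemma charFun_dampedShift (A : ℝ) (μ : Measure ℝ) (s : ℝ) :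
    charFun (dampedShift A μ) s = ∫ h : ℝ, Complex.exp (-(1 - s * I) * (h - A)) ∂μ := by
  rw [charFun_apply_real, dampedShift, integral_map (by fun_prop)
    (Continuous.aestronglyMeasurable (by fun_prop)),
    integral_withDensity_eq_integral_toReal_smul (by fun_prop)
      (ae_of_all _ fun h ↦ ENNReal.ofReal_lt_top)]
  congr! 2 with h
  rw [ENNReal.toReal_ofReal (Real.exp_pos _).le, Complex.real_smul, Complex.ofReal_exp,
    ← Complex.exp_add]
  push_cast
  ring_nf

lemma dampedShift_Ioo_eq_zero {x y : ℝ} (h : μ (Set.Ioo x y) = 0) :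
    dampedShift A μ (Set.Ioo (x - A) (y - A)) = 0 := by
  rw [dampedShift, Measure.map_apply (by fun_prop) measurableSet_Ioo,
    Set.preimage_sub_const_Ioo, sub_add_cancel, sub_add_cancel]
  exact withDensity_absolutelyContinuous _ _ h

end DampedShift

section NoGap

open scoped NNReal

variable {A T : ℝ} {ν : ℤ → Measure ℝ}

lemma IsSpectrum.integrable_exp_neg_sub (hs : IsSpectrum T ν) (A : ℝ) (J : ℤ) :
    Integrable (fun h ↦ Real.exp (-(h - A))) (ν J) := by
  refine ((hs.integrable_exp (x := 1 / 2) (y := 1 / 2) (by norm_num) (by norm_num) J).const_mul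
    (Real.exp (A + J / 2))).congr (ae_of_all _ fun h ↦ ?_)
  simp only [← Real.exp_add]
  ring_nf

lemma exists_norm_charFun_dampedShift_sub_le (hA : 0 < A) (hT : 0 < T) (hs : IsSpectrum T ν)
    (hmod : ModularInvariant A ν) : ∃ C > 0, ∃ κ > 0, ∀ᶠ J : ℤ in atTop, ∀ s : ℝ, s ^ 2 ≤ κ * √J →
      ‖charFun (dampedShift A (ν J)) s - charFun (crossedMeasure A J) s‖ ≤
        C * Real.exp (4 * π * √(A * J) - κ * √J) := by
  obtain ⟨C, hC, d, hd, hclose⟩ := exists_norm_integral_sub_laplace_le hA hT hs hmod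
  refine ⟨C, hC, d / (2 * π * √A * (5 * A + 1)), by positivity, ?_⟩
  filter_upwards [tendsto_intCast_atTop_atTop.eventually_ge_atTop (16 * π ^ 2 * A)] with J hJA s hsJ
  set κ := d / (2 * π * √A * (5 * A + 1)) with hκ
  have hJ : (0 : ℝ) < J := lt_of_lt_of_le (by positivity) hJA
  have hsqrtA : √A ^ 2 = A := Real.sq_sqrt hA.le
  have hsqrtJ : √(J : ℝ) ^ 2 = J := Real.sq_sqrt hJ.le
  -- This `r` minimizes the leading part `r J + 4 π² A / r` of the exponent.
  set r := 2 * π * √A / √J with hr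
  have hr_le : r ≤ 1 / 2 := by
    have : 4 * π * √A ≤ √J := Real.le_sqrt_of_sq_le (by rw [mul_pow, hsqrtA]; linarith)
    rw [hr, div_le_iff₀ (by positivity)]
    linarith
  have hexponent : r * J + (4 * π ^ 2 * A - d) / r =
      4 * π * √(A * J) - (5 * A + 1) * (κ * √J) := by
    rw [Real.sqrt_mul hA.le, hr, hκ]
    field_simp
    rw [hsqrtA, hsqrtJ]
    ring
  rw [charFun_dampedShift, charFun_crossedMeasure hA hJ.le]
  refine (hclose J (1 - s * I) r (by exact_mod_cast hJ.le) (by simp) (by positivity) hr_le).trans ?_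
  gcongr
  rw [hexponent]
  simp only [Complex.sub_im, Complex.one_im, Complex.mul_im, Complex.ofReal_re, Complex.I_im,
    Complex.ofReal_im, Complex.I_re]
  nlinarith

lemma exists_integral_exp_crossedMeasure_le (hA : 0 < A) (hT : 0 < T) (hs : IsSpectrum T ν)
    (hmod : ModularInvariant A ν) : ∃ K > 0, ∃ κ > 0, ∀ᶠ J : ℤ in atTop, ∀ v δ x : ℝ, 0 < v →
      0 ≤ δ → ν J (Set.Ioo (x - δ) (x + δ)) = 0 →
      ∫ t, Real.exp (-(v * (t - (x - A)) ^ 2 / 2)) ∂(crossedMeasure A J) ≤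
        K * Real.exp (4 * π * √(A * J)) * (Real.exp (-(κ * √J)) +
          Real.exp (-(κ * √J / (2 * v))) + Real.exp (-(v * δ ^ 2 / 2))) := by
  obtain ⟨C, hC, κ, hκ, hclose⟩ := exists_norm_charFun_dampedShift_sub_le hA hT hs hmod
  obtain ⟨B, hmass⟩ := exists_crossedMeasure_real_univ_le hA
  refine ⟨2 * (2 * |B| + C), by positivity, κ, hκ, ?_⟩
  filter_upwards [hclose, tendsto_intCast_atTop_atTop.eventually_ge_atTop (1 : ℝ)]
    with J hclose hJ v δ x hv hδ hgap
  have := isFiniteMeasure_crossedMeasure hA hJ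
  have := isFiniteMeasure_dampedShift (hs.integrable_exp_neg_sub A J)
  have hgap' := dampedShift_Ioo_eq_zero (A := A) hgap
  rw [sub_right_comm, add_sub_right_comm] at hgap'
  lift v to ℝ≥0 using hv.le
  have htest := integral_exp_le_of_charFun_close _ _ (NNReal.coe_pos.mp hv)
    (Real.sqrt_nonneg (κ * √J)) hδ
    (fun s hsΛ ↦ hclose s (sq_abs s ▸ (Real.le_sqrt (abs_nonneg s) (by positivity)).mp hsΛ)) hgap'
  rw [Real.sq_sqrt (by positivity), sub_eq_add_neg _ (κ * √J), Real.exp_add, ← mul_assoc] at htest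
  refine htest.trans ?_
  set M := Real.exp (4 * π * √(A * J))
  set E₁ := Real.exp (-(κ * √J))
  set E₂ := Real.exp (-(κ * √J / (2 * v)))
  set E₃ := Real.exp (-(v * δ ^ 2 / 2))
  have hq : (crossedMeasure A J).real Set.univ ≤ |B| * M :=
    (hmass J hJ).trans (by gcongr; exact le_abs_self B)
  have hη : C * M * E₁ ≤ C * M :=
    mul_le_of_le_one_right (by positivity)
      (Real.exp_le_one_iff.mpr (neg_nonpos.mpr (by positivity)))
  calc _ ≤ C * M * E₁ + (2 * (|B| * M) + C * M) * (2 * E₂) + E₃ * (|B| * M + C * M) := by gcongr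
    _ ≤ 2 * (2 * |B| + C) * M * (E₁ + E₂ + E₃) := by
        have h₁ : 0 ≤ |B| * M * E₁ := by positivity
        have h₂ : 0 ≤ C * M * E₁ := by positivity
        have h₃ : 0 ≤ |B| * M * E₃ := by positivity
        have h₄ : 0 ≤ C * M * E₃ := by positivity
        linarith

lemma eventually_pow_mul_exp_neg_rpow_lt {ε κ c : ℝ} (hε : 0 < ε) (hκ : 0 < κ) (hc : 0 < c)
    (C : ℝ) (n : ℕ) : ∀ᶠ x : ℝ in atTop, C * x ^ n * Real.exp (-(κ * x ^ ε)) < c := by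
  have hlim := ((tendsto_rpow_mul_exp_neg_mul_atTop_nhds_zero (n / ε) κ hκ).comp
    (tendsto_rpow_atTop hε)).const_mul C
  rw [mul_zero] at hlim
  filter_upwards [hlim.eventually_lt_const hc, eventually_gt_atTop 0] with x hx hx0
  rwa [Function.comp_apply, ← Real.rpow_mul hx0.le, mul_div_cancel₀ _ hε.ne', Real.rpow_natCast,
    neg_mul, ← mul_assoc] at hx

lemma exp_add_exp_add_exp_le_of_rpow {ε κ x : ℝ} (hκ : 0 < κ) (hε : ε ≤ 1 / 2) (hx : 1 ≤ x) :
    Real.exp (-(κ * √x)) + Real.exp (-(κ * √x / (2 * x ^ (1 / 2 - ε)))) +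
      Real.exp (-(x ^ (1 / 2 - ε) * (x ^ (-(1 / 4 : ℝ) + ε)) ^ 2 / 2)) ≤
      3 * Real.exp (-(min (κ / 2) (1 / 2) * x ^ ε)) := by
  have hx0 : 0 < x := by linarith
  have hsqrt : √x = x ^ ε * x ^ (1 / 2 - ε) := by
    rw [Real.sqrt_eq_rpow, ← Real.rpow_add hx0]
    ring_nf
  have hwidth : x ^ (1 / 2 - ε) * (x ^ (-(1 / 4 : ℝ) + ε)) ^ 2 = x ^ ε := by
    rw [← Real.rpow_mul_natCast hx0.le, ← Real.rpow_add hx0]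
    push_cast
    ring_nf
  have hfreq : κ * √x / (2 * x ^ (1 / 2 - ε)) = κ / 2 * x ^ ε := by
    rw [hsqrt]
    field_simp
  have hle : x ^ ε ≤ √x := by
    rw [Real.sqrt_eq_rpow]
    exact Real.rpow_le_rpow_of_exponent_le hx hε
  have h₁ : min (κ / 2) (1 / 2) * x ^ ε ≤ κ * √x := by
    gcongr
    exact (min_le_left _ _).trans (by linarith)
  have h₂ : min (κ / 2) (1 / 2) * x ^ ε ≤ κ / 2 * x ^ ε := by
    gcongr
    exact min_le_left _ _
  have h₃ : min (κ / 2) (1 / 2) * x ^ ε ≤ x ^ ε / 2 := by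
    nlinarith [min_le_right (κ / 2) (1 / 2), Real.rpow_pos_of_pos hx0 ε]
  rw [hfreq, hwidth]
  linarith [Real.exp_le_exp.mpr (neg_le_neg h₁), Real.exp_le_exp.mpr (neg_le_neg h₂),
    Real.exp_le_exp.mpr (neg_le_neg h₃)]

theorem eventually_measure_Ioo_ne_zero (hA : 0 < A) (hT : 0 < T) (hs : IsSpectrum T ν)
    (hmod : ModularInvariant A ν) (b : ℝ) {ε : ℝ} (hε : 0 < ε) (hε' : ε ≤ 1 / 2) :
    ∀ᶠ J : ℤ in atTop, ∀ x ∈ Set.Ico A b, ν J (Set.Ioo (x - (J : ℝ) ^ (-(1 / 4 : ℝ) + ε))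
      (x + (J : ℝ) ^ (-(1 / 4 : ℝ) + ε))) ≠ 0 := by
  obtain ⟨K, hK, κ, hκ, hupper⟩ := exists_integral_exp_crossedMeasure_le hA hT hs hmod
  obtain ⟨c, hc, hlower⟩ :=
    exists_le_integral_exp_crossedMeasure hA (X := max (b - A) 0) (le_max_right _ _)
  have hdecay := eventually_pow_mul_exp_neg_rpow_lt hε
    (show 0 < min (κ / 2) (1 / 2) by positivity) hc (3 * K) 3
  filter_upwards [hupper, tendsto_intCast_atTop_atTop.eventually hlower,
    tendsto_intCast_atTop_atTop.eventually hdecay,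
    tendsto_intCast_atTop_atTop.eventually_ge_atTop (1 : ℝ)]
    with J hupper hlower hdecay hJ x hx hgap
  have hv : (1 : ℝ) ≤ (J : ℝ) ^ (1 / 2 - ε) := Real.one_le_rpow hJ (by linarith)
  have hv' : (J : ℝ) ^ (1 / 2 - ε) ≤ J := by
    simpa using Real.rpow_le_rpow_of_exponent_le hJ (show 1 / 2 - ε ≤ 1 by linarith)
  refine hdecay.not_ge (le_of_mul_le_mul_right ?_ (Real.exp_pos (4 * π * √(A * J))))
  set M := Real.exp (4 * π * √(A * J))
  have hsandwich : c * M / J ^ 3 ≤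
      K * M * (3 * Real.exp (-(min (κ / 2) (1 / 2) * (J : ℝ) ^ ε))) := calc
    c * M / J ^ 3 ≤ c * M / (J * ((J : ℝ) ^ (1 / 2 - ε)) ^ 2) := by
      rw [pow_succ' (J : ℝ) 2]
      gcongr
    _ ≤ _ := hlower (x - A) _ (sub_nonneg.mpr hx.1)
      (le_max_of_le_left (by linarith [hx.2])) hv
    _ ≤ _ := hupper _ _ x (by positivity) (by positivity) hgap
    _ ≤ _ := by
      gcongr
      exact exp_add_exp_add_exp_le_of_rpow hκ hε' hJ
  rw [div_le_iff₀ (by positivity)] at hsandwich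
  linarith

end NoGap

section MaxGap

variable {μ : Measure ℝ}

lemma maxGap_nonneg (μ : Measure ℝ) (a b : ℝ) : 0 ≤ maxGap μ a b := by
  refine Real.sSup_nonneg ?_
  rintro _ ⟨x, -, rfl⟩
  exact Metric.diam_nonneg

lemma measure_eq_zero_of_disjoint_measSupport {s : Set ℝ} (h : Disjoint s (measSupport μ)) :
    μ s = 0 := by
  refine measure_null_of_locally_null s fun t ht ↦ ?_
  have hns : ¬ ∀ V : Set ℝ, IsOpen V → t ∈ V → 0 < μ V := Set.disjoint_left.mp h ht
  push Not at hns
  obtain ⟨V, hV, htV, hμV⟩ := hns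
  exact ⟨V, mem_nhdsWithin_of_mem_nhds (hV.mem_nhds htV), nonpos_iff_eq_zero.mp hμV⟩

lemma maxGap_le_of_forall_measure_Ioo_ne_zero {a b δ : ℝ} (hδ : 0 ≤ δ)
    (h : ∀ x ∈ Set.Ioo a b, μ (Set.Ioo (x - δ) (x + δ)) ≠ 0) : maxGap μ a b ≤ 2 * δ := by
  refine Real.sSup_le ?_ (by positivity)
  rintro _ ⟨x, -, rfl⟩
  set K := connectedComponentIn (Set.Ioo a b \ measSupport μ) x
  have hKsub : K ⊆ Set.Ioo a b \ measSupport μ := connectedComponentIn_subset _ _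
  have hKord : K.OrdConnected := isPreconnected_connectedComponentIn.ordConnected
  have hlength : ∀ y ∈ K, ∀ z ∈ K, z - y ≤ 2 * δ := by
    intro y hy z hz
    by_contra! hlong
    refine h ((y + z) / 2) ⟨?_, ?_⟩ (measure_eq_zero_of_disjoint_measSupport ?_)
    · linarith [(hKsub hy).1.1, (hKsub hz).1.1]
    · linarith [(hKsub hy).1.2, (hKsub hz).1.2]
    · refine Set.disjoint_left.mpr fun t ht ↦ (hKsub (hKord.out hy hz ?_)).2
      exact ⟨by linarith [ht.1], by linarith [ht.2]⟩
  refine Metric.diam_le_of_forall_dist_le (by positivity) fun y hy z hz ↦ ?_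
  rw [Real.dist_eq, abs_le]
  exact ⟨by linarith [hlength y hy z hz], hlength z hz y hy⟩

end MaxGap

end

/-- Corollary (maximal level spacing): for `(a,b) ⊆ (A,∞)`, the maximal spacing of the
spin-`J` spectrum vanishes faster than `J^(-1/4+ε)` as `J → ∞`. -/
theorem max_level_spacing
    (A Tgap : ℝ) (hA : 0 < A) (hTgap : 0 < Tgap)
    (ν : ℤ → Measure ℝ) (hspec : IsSpectrum Tgap ν) (hmod : ModularInvariant A ν)
    (a b : ℝ) (hAa : A ≤ a) (hab : a < b) (ε : ℝ) (hε : 0 < ε) :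
    Tendsto (fun J : ℤ => (J : ℝ) ^ ((1 / 4 : ℝ) - ε) * maxGap (ν J) a b) atTop (𝓝 0) := by
  obtain ⟨e, he0, he⟩ := exists_between (show 0 < min ε (1 / 2) by positivity)
  obtain ⟨heε, he1⟩ := lt_min_iff.mp he
  have hnogap := eventually_measure_Ioo_ne_zero hA hTgap hspec hmod b he0 he1.le
  have hlim : Tendsto (fun J : ℤ ↦ 2 * (J : ℝ) ^ (-(ε - e))) atTop (𝓝 0) := by
    simpa using ((tendsto_rpow_neg_atTop (sub_pos.mpr heε)).comp
      tendsto_intCast_atTop_atTop).const_mul 2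
  refine squeeze_zero' ?_ ?_ hlim
  · filter_upwards [eventually_ge_atTop 0] with J hJ
    exact mul_nonneg (Real.rpow_nonneg (by exact_mod_cast hJ) _) (maxGap_nonneg _ _ _)
  · filter_upwards [hnogap, eventually_gt_atTop 0] with J hnogap hJ
    have hJ : (0 : ℝ) < J := by exact_mod_cast hJ
    calc (J : ℝ) ^ ((1 / 4 : ℝ) - ε) * maxGap (ν J) a b
        ≤ (J : ℝ) ^ ((1 / 4 : ℝ) - ε) * (2 * (J : ℝ) ^ (-(1 / 4 : ℝ) + e)) := by
          gcongr
          exact maxGap_le_of_forall_measure_Ioo_ne_zero (by positivity) fun x hx ↦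
            hnogap x ⟨hAa.trans hx.1.le, hx.2⟩
      _ = 2 * (J : ℝ) ^ (-(ε - e)) := by
          rw [mul_left_comm, ← Real.rpow_add hJ]
          ring_nf
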